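/- arXiv:1609.04195 — 3 statements merged into one kernel-verified Lean document; each statement's English description precedes it below -/
import Mathlib

section
/- Let A be an n×n complex Hermitian matrix with n ≥ 2, let r ≥ 1 be an integer, and let 1 ≤ i ≤ n. Then χ_r[A] has n real roots λ₁ ≤ ⋯ ≤ λ_n (counted with multiplicity) and χ_r[A_i] has n−1 real roots μ₁ ≤ ⋯ ≤ μ_{n−1}, and these interlace: λ_k ≤ μ_k ≤ λ_{k+1} for all 1 ≤ k ≤ n−1. -/
open Polynomial Matrix

/-- The number of cycles of a permutation, counting fixed points as cycles. -/
def cycleCount {ι : Type*} [Fintype ι] [DecidableEq ι] (σ : Equiv.Perm ι) : ℕ :=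
  σ.cycleType.card + (Fintype.card ι - σ.support.card)

/-- The `r`-determinant `det_r(M) = Σ_σ sgn(σ) r^{c(σ)} Π_i M_{i σ(i)}`. -/
noncomputable def detr {ι : Type*} [Fintype ι] [DecidableEq ι] {R : Type*} [CommRing R]
    (r : ℕ) (M : Matrix ι ι R) : R :=
  ∑ σ : Equiv.Perm ι, ((Equiv.Perm.sign σ : ℤ) : R) * (r : R) ^ cycleCount σ * ∏ i, M i (σ i)

/-- The `r`-characteristic polynomial `χ_r[A](x) = det_r(xI - A)`. -/
noncomputable def chir {n : ℕ} (r : ℕ) (A : Matrix (Fin n) (Fin n) ℂ) : Polynomial ℂ :=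
  detr r (Matrix.charmatrix A)

/-!
Colouring the cycles of a permutation with `r` colours gives
`det_r M = ∑ f, ∏ c, det M[f⁻¹ c]`, the sum running over all colourings `f` of the index set by
`r` colours. Up to a constant this is `det(Z - A)^r` differentiated `r - 1` times in each variable
of `Z = diag(z)`. Such derivatives preserve the absence of zeros in the upper half-plane: as a
polynomial in one variable, `∑ f, ∏ c, (w a_{fc} + b_{fc})` has its leading two coefficients related
by the sum of its roots, all in the closed lower half-plane. The same relation shows
`Im (χ_r[A] / χ_r[A_i]) > 0` on the upper half-plane. So the argument of this quotient never leaves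
`(0, π)`, and its boundary value at a real `x`, which counts the roots on either side of `x`,
forces interlacing.
-/

section CycleCount

lemma apply_eq_of_sameCycle {ι α : Type*} [Finite ι] {σ : Equiv.Perm ι} {f : ι → α}
    (hf : ∀ j, f (σ j) = f j) {x y : ι} (h : σ.SameCycle x y) : f x = f y := by
  obtain ⟨k, -, rfl⟩ := h.exists_pow_eq'
  clear h
  induction k with
  | zero => rfl
  | succ k ih => rw [ih, pow_succ', Equiv.Perm.mul_apply, hf]

variable {ι : Type*} [Fintype ι] [DecidableEq ι]

/-- The cycle of `σ` through a point; a fixed point is its own cycle, and is kept apart because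
`cycleFactorsFinset` only records nontrivial cycles. -/
def cycleLabel (σ : Equiv.Perm ι) (x : ι) : σ.cycleFactorsFinset ⊕ Function.fixedPoints σ :=
  if h : σ x = x then .inr ⟨x, h⟩
  else .inl ⟨σ.cycleOf x,
    Equiv.Perm.cycleOf_mem_cycleFactorsFinset_iff.2 (Equiv.Perm.mem_support.2 h)⟩

lemma cycleLabel_surjective (σ : Equiv.Perm ι) : Function.Surjective (cycleLabel σ) := by
  rintro (⟨c, hc⟩ | ⟨x, hx⟩)
  · obtain ⟨x, hx⟩ := (Equiv.Perm.mem_cycleFactorsFinset_iff.1 hc).1.nonempty_support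
    have hσx : σ x ≠ x :=
      Equiv.Perm.mem_support.1 (Equiv.Perm.mem_cycleFactorsFinset_support_le hc hx)
    exact ⟨x, by simp [cycleLabel, hσx, Equiv.Perm.cycle_is_cycleOf hx hc]⟩
  · exact ⟨x, dif_pos hx⟩

lemma cycleLabel_eq_iff {σ : Equiv.Perm ι} {x y : ι} :
    cycleLabel σ x = cycleLabel σ y ↔ σ.SameCycle x y := by
  by_cases hfix : σ x = x ↔ σ y = y
  · by_cases hx : σ x = x
    · have hy := hfix.1 hx
      rw [cycleLabel, cycleLabel, dif_pos hx, dif_pos hy, Sum.inr_injective.eq_iff, Subtype.ext_iff]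
      exact ⟨fun h => h.sameCycle σ, fun h => h.eq_of_left hx⟩
    · have hy := mt hfix.2 hx
      simpa [cycleLabel, hx, hy] using
        (Equiv.Perm.sameCycle_iff_cycleOf_eq_of_mem_support
          (Equiv.Perm.mem_support.2 hx) (Equiv.Perm.mem_support.2 hy)).symm
  · refine iff_of_false (fun h => hfix ?_) (mt Equiv.Perm.SameCycle.apply_eq_self_iff hfix)
    by_cases hx : σ x = x <;> by_cases hy : σ y = y <;> simp_all [cycleLabel]

lemma card_apply_perm_eq (σ : Equiv.Perm ι) (α : Type*) [Fintype α] [DecidableEq α] :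
    Fintype.card {f : ι → α // ∀ j, f (σ j) = f j} = Fintype.card α ^ cycleCount σ := by
  have hcard : Fintype.card (σ.cycleFactorsFinset ⊕ Function.fixedPoints σ) = cycleCount σ := by
    rw [Fintype.card_sum, Equiv.Perm.card_fixedPoints, Equiv.Perm.sum_cycleType, cycleCount,
      Equiv.Perm.cycleType_def]
    simp
  have hlabel (j : ι) : cycleLabel σ (σ j) = cycleLabel σ j :=
    cycleLabel_eq_iff.2 (Equiv.Perm.sameCycle_apply_left.2 .rfl)
  let ofLabels (g : σ.cycleFactorsFinset ⊕ Function.fixedPoints σ → α) :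
      {f : ι → α // ∀ j, f (σ j) = f j} :=
    ⟨g ∘ cycleLabel σ, fun j => congrArg g (hlabel j)⟩
  have hbij : Function.Bijective ofLabels := by
    refine ⟨fun g g' h => (cycleLabel_surjective σ).injective_comp_right (congrArg Subtype.val h),
      fun ⟨f, hf⟩ => ⟨f ∘ Function.surjInv (cycleLabel_surjective σ), Subtype.ext ?_⟩⟩
    ext x
    exact apply_eq_of_sameCycle hf (cycleLabel_eq_iff.1 (Function.surjInv_eq _ _))
  rw [← Fintype.card_of_bijective hbij, Fintype.card_fun, hcard]

end CycleCount

section PrincipalMinor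

variable {ι κ R : Type*} [CommRing R]

/-- The principal minor of `M` with rows and columns in `s`. -/
def principalMinor [DecidableEq ι] (M : Matrix ι ι R) (s : Finset ι) : R :=
  (M.submatrix ((↑) : s → ι) (↑)).det

variable [DecidableEq ι]

lemma principalMinor_map [DecidableEq κ] (M : Matrix ι ι R) (e : κ ↪ ι) (s : Finset κ) :
    principalMinor M (s.map e) = principalMinor (M.submatrix e e) s := by
  rw [principalMinor, ← det_submatrix_equiv_self (s.equivMap e)]
  rfl

lemma det_updateRow_single_one [Fintype ι] (M : Matrix ι ι R) (i : ι) :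
    (M.updateRow i (Pi.single i 1)).det =
      (M.submatrix ((↑) : {j // j ≠ i} → ι) (↑)).det := by
  rw [twoBlockTriangular_det _ (· ≠ i)]
  · have hrow : (M.updateRow i (Pi.single i 1)).toSquareBlockProp (· ≠ i) =
        M.submatrix ((↑) : {j // j ≠ i} → ι) (↑) := by
      ext ⟨j, hj⟩ k
      simp [toSquareBlockProp, hj]
    have : Subsingleton {j // ¬ j ≠ i} := ⟨fun a b => by grind⟩
    rw [hrow, det_eq_elem_of_subsingleton _ (⟨i, not_not.2 rfl⟩ : {j // ¬ j ≠ i})]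
    simp [toSquareBlockProp]
  · rintro j hj k hk
    obtain rfl := not_not.1 hj
    simp [hk]

lemma principalMinor_add_single_insert (M : Matrix ι ι R) {s : Finset ι} {i : ι} (hi : i ∉ s)
    (w : R) :
    principalMinor (M + single i i w) (insert i s) =
      w * principalMinor M s + principalMinor M (insert i s) := by
  set N := M.submatrix (Subtype.val : ↥(insert i s) → ι) Subtype.val with hN
  let i' : ↥(insert i s) := ⟨i, Finset.mem_insert_self i s⟩
  have hrow : (M + single i i w).submatrix (Subtype.val : ↥(insert i s) → ι) Subtype.val =
      N.updateRow i' (w • Pi.single i' 1 + N i') := by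
    ext j k
    by_cases hj : j = i'
    · subst hj
      simp [hN, single_apply, Pi.single_apply, i', Subtype.ext_iff, eq_comm, add_comm]
    · have : i ≠ j := fun h => hj (Subtype.ext h.symm)
      simp [hN, hj, this]
  have hminor : (N.submatrix (Subtype.val : {j // j ≠ i'} → _) Subtype.val).det =
      principalMinor M s := by
    let e : s ≃ {j // j ≠ i'} :=
      { toFun j := ⟨⟨j, Finset.mem_insert_of_mem j.2⟩, by grind⟩
        invFun j := ⟨j.1, by grind⟩ }
    rw [← det_submatrix_equiv_self e]
    rfl
  rw [principalMinor, hrow, det_updateRow_add, det_updateRow_smul, updateRow_eq_self,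
    det_updateRow_single_one, hminor]
  rfl

lemma principalMinor_diagonal_update_insert (z : ι → R) (A : Matrix ι ι R) {s : Finset ι} {i : ι}
    (hi : i ∉ s) (w : R) :
    principalMinor (diagonal (Function.update z i w) - A) (insert i s) =
      w * principalMinor (diagonal z - A) s +
        principalMinor (diagonal (Function.update z i 0) - A) (insert i s) := by
  have hsplit : diagonal (Function.update z i w) - A =
      (diagonal (Function.update z i 0) - A) + single i i w := by
    ext j k
    by_cases hj : j = i
    · subst hj; by_cases hk : j = k <;> simp [hk, sub_eq_neg_add]
    · simp [diagonal_apply, Function.update_of_ne hj, Ne.symm hj]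
  have hminor : principalMinor (diagonal (Function.update z i 0) - A) s =
      principalMinor (diagonal z - A) s := by
    refine congrArg det ?_
    ext j k
    have hj : (j : ι) ≠ i := fun h => hi (h ▸ j.2)
    simp [diagonal_apply, Function.update_of_ne hj]
  rw [hsplit, principalMinor_add_single_insert _ hi, hminor]

variable [Fintype ι]

lemma det_ite_eq_prod_principalMinor {α : Type*} [Fintype α] [LinearOrder α] (M : Matrix ι ι R)
    (f : ι → α) :
    (of fun j k => if f k = f j then M j k else 0).det =
      ∏ c, principalMinor M {j | f j = c} := by
  have htri : BlockTriangular (of fun j k => if f k = f j then M j k else 0) f :=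
    fun j k h => if_neg h.ne
  rw [htri.det_fintype]
  refine Finset.prod_congr rfl fun c _ => ?_
  have hmem (j : ι) : f j = c ↔ j ∈ ({j | f j = c} : Finset ι) := by simp
  rw [principalMinor, ← det_submatrix_equiv_self (Equiv.subtypeEquivRight hmem)]
  congr 1
  ext ⟨j, hj⟩ ⟨k, hk⟩
  simp [toSquareBlock, toSquareBlockProp, hj, hk]

lemma detr_eq_sum_prod_principalMinor (r : ℕ) (M : Matrix ι ι R) :
    detr r M = ∑ f : ι → Fin r, ∏ c, principalMinor M {j | f j = c} := by
  have hprod (σ : Equiv.Perm ι) (f : ι → Fin r) :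
      (∏ i, if f (σ i) = f i then M i (σ i) else 0) =
        if ∀ i, f (σ i) = f i then ∏ i, M i (σ i) else 0 := by
    simpa using Finset.prod_ite_zero (s := Finset.univ) (p := fun i => f (σ i) = f i)
      (f := fun i => M i (σ i))
  have hsum (σ : Equiv.Perm ι) :
      ∑ f : ι → Fin r, (∏ i, if f (σ i) = f i then M i (σ i) else 0) =
        (r : R) ^ cycleCount σ * ∏ i, M i (σ i) := by
    simp_rw [hprod]
    rw [← Finset.sum_filter, Finset.sum_const, ← Fintype.card_subtype, card_apply_perm_eq]
    simp
  calc detr r M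
      = ∑ σ : Equiv.Perm ι, ∑ f : ι → Fin r,
          ((Equiv.Perm.sign σ : ℤ) : R) * ∏ i, if f (σ i) = f i then M i (σ i) else 0 := by
        simp only [detr, ← Finset.mul_sum, hsum, mul_assoc]
    _ = ∑ f : ι → Fin r, (of fun j k => if f k = f j then M j k else 0).det := by
        rw [Finset.sum_comm]
        refine Finset.sum_congr rfl fun f _ => ?_
        rw [← det_transpose, det_apply']
        rfl
    _ = _ := by simp_rw [det_ite_eq_prod_principalMinor]

end PrincipalMinor

section LogDerivative

lemma im_eval_derivative_div_eval_nonneg {G : ℂ[X]} {x : ℂ}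
    (hG : ∀ w : ℂ, w.im < x.im → G.eval w ≠ 0) :
    0 ≤ (G.derivative.eval x / G.eval x).im := by
  by_cases hx : G.eval x = 0
  · simp [hx]
  rw [(IsAlgClosed.splits G).eval_derivative_div_eval_of_ne_zero hx, ← Complex.coe_imAddGroupHom,
    map_multiset_sum, Multiset.map_map]
  refine Multiset.sum_nonneg fun y hy => ?_
  obtain ⟨w, hw, rfl⟩ := Multiset.mem_map.1 hy
  have him : x.im ≤ w.im := not_lt.1 fun h => hG w h (isRoot_of_mem_roots hw)
  simpa [Complex.inv_im] using div_nonneg (sub_nonneg.2 him) (Complex.normSq_nonneg _)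

variable {φ κ : Type*} [Fintype φ] [Fintype κ] [DecidableEq κ]

lemma im_sum_mul_prod_erase_div_nonneg (a b : φ → κ → ℂ)
    (h : ∀ w : ℂ, 0 < w.im → ∑ f, ∏ c, (w * a f c + b f c) ≠ 0) :
    0 ≤ ((∑ f, ∑ c, b f c * ∏ d ∈ Finset.univ.erase c, a f d) / ∑ f, ∏ c, a f c).im := by
  -- The reversal `w = 1 / t` makes the leading coefficient in `w` the value at `t = 0`.
  let G : ℂ[X] := ∑ f, ∏ c, (C (a f c) + X * C (b f c))
  have hG (t : ℂ) (ht : t.im < (0 : ℂ).im) : G.eval t ≠ 0 := by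
    have ht0 : t ≠ 0 := by rintro rfl; exact ht.ne rfl
    have hinv : 0 < t⁻¹.im := by
      rw [Complex.inv_im]
      exact div_pos (neg_pos.2 ht) (Complex.normSq_pos.2 ht0)
    have hscale : G.eval t = t ^ Fintype.card κ * ∑ f, ∏ c, (t⁻¹ * a f c + b f c) := by
      simp only [G, eval_finsetSum, eval_prod, eval_add, eval_mul, eval_C, eval_X, Finset.mul_sum]
      refine Finset.sum_congr rfl fun f _ => ?_
      rw [← Finset.card_univ, ← Finset.prod_const, ← Finset.prod_mul_distrib]
      refine Finset.prod_congr rfl fun c _ => ?_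
      field_simp
    rw [hscale]
    exact mul_ne_zero (pow_ne_zero _ ht0) (h _ hinv)
  have hderiv : G.derivative.eval 0 =
      ∑ f, ∑ c, b f c * ∏ d ∈ Finset.univ.erase c, a f d := by
    simp [G, derivative_prod_finset, eval_finsetSum, eval_prod, mul_comm (b _ _)]
  have heval : G.eval 0 = ∑ f, ∏ c, a f c := by
    simp [G, eval_finsetSum, eval_prod]
  rw [← hderiv, ← heval]
  exact im_eval_derivative_div_eval_nonneg hG

lemma im_sum_mul_add_mul_prod_erase_div_pos [Nonempty κ] (a b : φ → κ → ℂ) {z : ℂ} (hz : 0 < z.im)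
    (h : ∀ w : ℂ, 0 < w.im → ∑ f, ∏ c, (w * a f c + b f c) ≠ 0) (ha : ∑ f, ∏ c, a f c ≠ 0) :
    0 < ((∑ f, ∑ c, (z * a f c + b f c) * ∏ d ∈ Finset.univ.erase c, a f d) /
      ∑ f, ∏ c, a f c).im := by
  have hsplit : ∑ f, ∑ c, (z * a f c + b f c) * ∏ d ∈ Finset.univ.erase c, a f d =
      Fintype.card κ * z * ∑ f, ∏ c, a f c +
        ∑ f, ∑ c, b f c * ∏ d ∈ Finset.univ.erase c, a f d := by
    simp only [add_mul, mul_assoc, Finset.sum_add_distrib,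
      Finset.mul_prod_erase _ _ (Finset.mem_univ _), ← Finset.mul_sum, Finset.sum_const,
      Finset.card_univ, nsmul_eq_mul]
    ring
  have hcard : 0 < (Fintype.card κ * z).im := by
    simpa using mul_pos (Nat.cast_pos.2 Fintype.card_pos) hz
  rw [hsplit, add_div, mul_div_cancel_right₀ _ ha, Complex.add_im]
  exact add_pos_of_pos_of_nonneg hcard (im_sum_mul_prod_erase_div_nonneg a b h)

end LogDerivative

section Hermitian

variable {ι : Type*} [DecidableEq ι] {A : Matrix ι ι ℂ} {z : ι → ℂ}

lemma det_diagonal_sub_ne_zero [Fintype ι] (hA : A.IsHermitian) (hz : ∀ j, 0 < (z j).im) :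
    (diagonal z - A).det ≠ 0 := by
  intro hdet
  obtain ⟨v, hv, hker⟩ := exists_mulVec_eq_zero_iff.2 hdet
  have hquad : (star v ⬝ᵥ (diagonal z *ᵥ v)).im = 0 := by
    rw [sub_eq_zero.1 ((sub_mulVec _ _ _).symm.trans hker)]
    exact hA.im_star_dotProduct_mulVec_self v
  have hsum : (star v ⬝ᵥ (diagonal z *ᵥ v)).im = ∑ j, (z j).im * Complex.normSq (v j) := by
    simp only [dotProduct, mulVec_diagonal, Complex.im_sum]
    refine Finset.sum_congr rfl fun j _ => ?_
    simp only [Pi.star_apply, Complex.star_def, Complex.mul_im, Complex.mul_re, Complex.conj_re,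
      Complex.conj_im, Complex.normSq_apply]
    ring
  rw [hsum, Finset.sum_eq_zero_iff_of_nonneg
    fun j _ => mul_nonneg (hz j).le (Complex.normSq_nonneg _)] at hquad
  refine hv (funext fun j => ?_)
  simpa [(hz j).ne'] using hquad j (Finset.mem_univ j)

lemma principalMinor_diagonal_sub_ne_zero (hA : A.IsHermitian) (hz : ∀ j, 0 < (z j).im)
    (s : Finset ι) : principalMinor (diagonal z - A) s ≠ 0 := by
  rw [principalMinor, submatrix_sub, Pi.sub_apply, Pi.sub_apply,
    submatrix_diagonal _ _ Subtype.val_injective]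
  exact det_diagonal_sub_ne_zero (hA.submatrix _) fun j => hz j

end Hermitian

section MixedMinorSum

lemma card_mul_sum_eq_sum_sum_update {ι κ R : Type*} [Fintype ι] [DecidableEq ι] [Fintype κ]
    [NonAssocSemiring R] (i : ι) (h : (ι → κ) → R) :
    Fintype.card κ * ∑ f, h f = ∑ f, ∑ c, h (Function.update f i c) := by
  let swap (p : (ι → κ) × κ) : (ι → κ) × κ := (Function.update p.1 i p.2, p.1 i)
  have hswap : Function.Involutive swap := fun p => by simp [swap]
  calc (Fintype.card κ : R) * ∑ f, h f
      = ∑ p : (ι → κ) × κ, h p.1 := by simp [Fintype.sum_prod_type, Finset.mul_sum]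
    _ = ∑ p, h (swap p).1 := (hswap.bijective.sum_comp fun p => h p.1).symm
    _ = _ := Fintype.sum_prod_type _

variable {ι R : Type*} [Fintype ι] [DecidableEq ι] [CommRing R]

/-- With `r = |κ|`, the sum over `κ`-colourings of products of principal minors in which the indices
of `S` are split among the `r` minors, those of `T` belong to each of them, and the others to none.
For `M = diag(z) - A` this is, up to a positive factor, `det(M)^r` differentiated `r - 1` times in
each `z_j` with `j ∈ S` and `r` times in each `z_j` with `j ∉ S ∪ T`. All the indices get coloured,
so each colouring of `S` is counted `r^|Sᶜ|` times. -/
def mixedMinorSum (κ : Type*) [Fintype κ] [DecidableEq κ] (M : Matrix ι ι R) (S T : Finset ι) : R :=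
  ∑ f : ι → κ, ∏ c, principalMinor M (T ∪ {j ∈ S | f j = c})

lemma mixedMinorSum_univ_empty (r : ℕ) (M : Matrix ι ι R) :
    mixedMinorSum (Fin r) M Finset.univ ∅ = detr r M := by
  simp only [mixedMinorSum, Finset.empty_union, detr_eq_sum_prod_principalMinor]

lemma mixedMinorSum_erase_empty {n : ℕ} (r : ℕ) (M : Matrix (Fin (n + 1)) (Fin (n + 1)) R)
    (i : Fin (n + 1)) :
    mixedMinorSum (Fin r) M (Finset.univ.erase i) ∅ =
      r * detr r (M.submatrix i.succAbove i.succAbove) := by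
  have hblock (a : Fin r) (f : Fin n → Fin r) (c : Fin r) :
      ({j ∈ Finset.univ.erase i | i.insertNth (α := fun _ => Fin r) a f j = c} : Finset _) =
        Finset.map i.succAboveEmb {k | f k = c} := by
    ext j
    cases j using i.succAboveCases <;> simp
  calc mixedMinorSum (Fin r) M (Finset.univ.erase i) ∅
      = ∑ a : Fin r, ∑ f : Fin n → Fin r, ∏ c, principalMinor M
          {j ∈ Finset.univ.erase i | i.insertNth (α := fun _ => Fin r) a f j = c} := by
        simp only [mixedMinorSum, Finset.empty_union]
        rw [← (Fin.insertNthEquiv (fun _ => Fin r) i).sum_comp, Fintype.sum_prod_type]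
        rfl
    _ = ∑ _ : Fin r, detr r (M.submatrix i.succAbove i.succAbove) := by
        simp only [hblock, principalMinor_map, detr_eq_sum_prod_principalMinor,
          Fin.coe_succAboveEmb]
    _ = _ := by simp

variable {κ : Type*} [Fintype κ] [DecidableEq κ] {S T : Finset ι} {i : ι}

lemma card_mul_mixedMinorSum_insert (M : Matrix ι ι R) (hS : i ∉ S) :
    Fintype.card κ * mixedMinorSum κ M (insert i S) T =
      ∑ f : ι → κ, ∑ c, principalMinor M (insert i (T ∪ {j ∈ S | f j = c})) *
        ∏ d ∈ Finset.univ.erase c, principalMinor M (T ∪ {j ∈ S | f j = d}) := by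
  have hfilter (f : ι → κ) (c d : κ) :
      ({j ∈ S | Function.update f i c j = d} : Finset ι) = {j ∈ S | f j = d} :=
    Finset.filter_congr fun j hj => by rw [Function.update_of_ne (ne_of_mem_of_not_mem hj hS)]
  rw [mixedMinorSum, card_mul_sum_eq_sum_sum_update i]
  refine Finset.sum_congr rfl fun f _ => Finset.sum_congr rfl fun c _ => ?_
  rw [← Finset.mul_prod_erase _ _ (Finset.mem_univ c)]
  congr 1
  · simp [Finset.filter_insert, hfilter]
  · refine Finset.prod_congr rfl fun d hd => ?_
    simp [Finset.filter_insert, hfilter, (Finset.ne_of_mem_erase hd).symm]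

variable {A : Matrix ι ι ℂ} {z : ι → ℂ} [Nonempty κ]

lemma im_card_mul_mixedMinorSum_insert_div_pos
    (hstable : ∀ {T : Finset ι} {y : ι → ℂ}, Disjoint S T → (∀ j, 0 < (y j).im) →
      mixedMinorSum κ (diagonal y - A) S T ≠ 0)
    (hS : i ∉ S) (hdisj : Disjoint (insert i S) T) (hz : ∀ j, 0 < (z j).im) :
    0 < (Fintype.card κ * mixedMinorSum κ (diagonal z - A) (insert i S) T /
      mixedMinorSum κ (diagonal z - A) S T).im := by
  obtain ⟨hT, hdisj⟩ := Finset.disjoint_insert_left.1 hdisj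
  let block (f : ι → κ) (c : κ) : Finset ι := T ∪ {j ∈ S | f j = c}
  let a (f : ι → κ) (c : κ) : ℂ := principalMinor (diagonal z - A) (block f c)
  let b (f : ι → κ) (c : κ) : ℂ :=
    principalMinor (diagonal (Function.update z i 0) - A) (insert i (block f c))
  have hlin (w : ℂ) (f : ι → κ) (c : κ) :
      principalMinor (diagonal (Function.update z i w) - A) (insert i (block f c)) =
        w * a f c + b f c :=
    principalMinor_diagonal_update_insert z A (by simp [block, hS, hT]) w
  have hne (w : ℂ) (hw : 0 < w.im) : ∑ f, ∏ c, (w * a f c + b f c) ≠ 0 := by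
    have hupdate : ∀ j, 0 < (Function.update z i w j).im :=
      (Function.forall_update_iff z fun _ y => 0 < y.im).2 ⟨hw, fun j _ => hz j⟩
    simpa only [mixedMinorSum, Finset.insert_union, hlin, block] using
      hstable (Finset.disjoint_insert_right.2 ⟨hS, hdisj⟩) hupdate
  have hpos := im_sum_mul_add_mul_prod_erase_div_pos a b (hz i) hne (hstable hdisj hz)
  simp only [← hlin, Function.update_eq_self] at hpos
  rwa [card_mul_mixedMinorSum_insert _ hS]

lemma mixedMinorSum_ne_zero (hA : A.IsHermitian) (hdisj : Disjoint S T)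
    (hz : ∀ j, 0 < (z j).im) : mixedMinorSum κ (diagonal z - A) S T ≠ 0 := by
  induction S using Finset.induction_on generalizing T z with
  | empty => simp [mixedMinorSum, principalMinor_diagonal_sub_ne_zero hA hz T]
  | insert i S hi ih =>
    intro hzero
    simpa [hzero] using im_card_mul_mixedMinorSum_insert_div_pos ih hi hdisj hz

end MixedMinorSum

section Stability

lemma detr_diagonal_sub_ne_zero {ι : Type*} [Fintype ι] [DecidableEq ι] {r : ℕ} (hr : r ≠ 0)
    {A : Matrix ι ι ℂ} (hA : A.IsHermitian) {z : ι → ℂ} (hz : ∀ j, 0 < (z j).im) :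
    detr r (diagonal z - A) ≠ 0 := by
  have : NeZero r := ⟨hr⟩
  rw [← mixedMinorSum_univ_empty]
  exact mixedMinorSum_ne_zero hA (Finset.disjoint_empty_right _) hz

lemma im_detr_div_detr_submatrix_succAbove_pos {n r : ℕ} (hr : r ≠ 0)
    {A : Matrix (Fin (n + 1)) (Fin (n + 1)) ℂ} (hA : A.IsHermitian) (i : Fin (n + 1))
    {z : Fin (n + 1) → ℂ} (hz : ∀ j, 0 < (z j).im) :
    0 < (detr r (diagonal z - A) /
      detr r ((diagonal z - A).submatrix i.succAbove i.succAbove)).im := by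
  have : NeZero r := ⟨hr⟩
  have hpos := im_card_mul_mixedMinorSum_insert_div_pos (κ := Fin r) (T := ∅)
    (mixedMinorSum_ne_zero hA) (Finset.notMem_erase i Finset.univ)
    (Finset.disjoint_empty_right _) hz
  rwa [Finset.insert_erase (Finset.mem_univ i), mixedMinorSum_univ_empty,
    mixedMinorSum_erase_empty, Fintype.card_fin,
    mul_div_mul_left _ _ (Nat.cast_ne_zero.2 hr)] at hpos

end Stability

section Roots

lemma map_detr {ι R S : Type*} [Fintype ι] [DecidableEq ι] [CommRing R] [CommRing S] (g : R →+* S)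
    (r : ℕ) (M : Matrix ι ι R) : g (detr r M) = detr r (M.map g) := by
  simp [detr]

lemma detr_neg {ι R : Type*} [Fintype ι] [DecidableEq ι] [CommRing R] (r : ℕ) (M : Matrix ι ι R) :
    detr r (-M) = (-1) ^ Fintype.card ι * detr r M := by
  simp only [detr, Matrix.neg_apply, Finset.prod_neg, Finset.card_univ, Finset.mul_sum]
  exact Finset.sum_congr rfl fun σ _ => by ring

variable {n : ℕ} {r : ℕ} {A : Matrix (Fin n) (Fin n) ℂ}

lemma eval_chir (r : ℕ) (A : Matrix (Fin n) (Fin n) ℂ) (x : ℂ) :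
    (chir r A).eval x = detr r (diagonal (fun _ => x) - A) := by
  rw [chir, ← coe_evalRingHom, map_detr]
  congr 1
  ext j k
  by_cases h : j = k
  · subst h; simp
  · simp [h]

lemma eval_chir_neg (r : ℕ) (A : Matrix (Fin n) (Fin n) ℂ) (x : ℂ) :
    (chir r (-A)).eval (-x) = (-1) ^ n * (chir r A).eval x := by
  have hneg : diagonal (fun _ => -x) - -A = -(diagonal (fun _ => x) - A) := by
    rw [neg_sub, ← diagonal_neg]
    abel
  rw [eval_chir, eval_chir, hneg, detr_neg, Fintype.card_fin]

lemma eval_chir_ne_zero (hr : r ≠ 0) (hA : A.IsHermitian) {x : ℂ} (hx : x.im ≠ 0) :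
    (chir r A).eval x ≠ 0 := by
  rcases hx.lt_or_gt with hlt | hgt
  · refine right_ne_zero_of_mul (a := (-1) ^ n) ?_
    rw [← eval_chir_neg, eval_chir]
    exact detr_diagonal_sub_ne_zero hr hA.neg fun _ => by simpa using hlt
  · rw [eval_chir]
    exact detr_diagonal_sub_ne_zero hr hA fun _ => hgt

lemma im_eval_chir_div_eval_chir_submatrix_succAbove_pos (hr : r ≠ 0)
    {A : Matrix (Fin (n + 1)) (Fin (n + 1)) ℂ} (hA : A.IsHermitian) (i : Fin (n + 1)) {z : ℂ}
    (hz : 0 < z.im) :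
    0 < ((chir r A).eval z / (chir r (A.submatrix i.succAbove i.succAbove)).eval z).im := by
  have hsub : diagonal (fun _ => z) - A.submatrix i.succAbove i.succAbove =
      (diagonal (fun _ => z) - A).submatrix i.succAbove i.succAbove := by
    rw [submatrix_sub, Pi.sub_apply, Pi.sub_apply,
      submatrix_diagonal _ _ Fin.succAbove_right_injective]
    rfl
  rw [eval_chir, eval_chir, hsub]
  exact im_detr_div_detr_submatrix_succAbove_pos hr hA i fun _ => hz

lemma principalMinor_charmatrix {ι R : Type*} [Fintype ι] [DecidableEq ι] [CommRing R]
    (M : Matrix ι ι R) (s : Finset ι) :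
    principalMinor M.charmatrix s = (M.submatrix ((↑) : s → ι) (↑)).charpoly := by
  rw [principalMinor, charpoly]
  refine congrArg det (Matrix.ext fun j k => ?_)
  simp only [submatrix_apply, charmatrix_apply, diagonal_apply, Subtype.ext_iff]

lemma isMonicOfDegree_prod_principalMinor_charmatrix {ι R κ : Type*} [Fintype ι] [DecidableEq ι]
    [CommRing R] [Nontrivial R] [Fintype κ] [DecidableEq κ] (M : Matrix ι ι R) (f : ι → κ) :
    IsMonicOfDegree (∏ c, principalMinor M.charmatrix {j | f j = c}) (Fintype.card ι) := by
  have hmonic (c : κ) : (principalMinor M.charmatrix {j | f j = c}).Monic := by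
    rw [principalMinor_charmatrix]
    exact charpoly_monic _
  refine ⟨?_, monic_prod_of_monic _ _ fun c _ => hmonic c⟩
  rw [natDegree_prod_of_monic _ _ fun c _ => hmonic c]
  simp only [principalMinor_charmatrix, charpoly_natDegree_eq_dim, Fintype.card_coe]
  exact (Finset.card_eq_sum_card_fiberwise fun _ _ => Finset.mem_univ _).symm

lemma natDegree_chir_le (r : ℕ) (A : Matrix (Fin n) (Fin n) ℂ) : (chir r A).natDegree ≤ n := by
  rw [chir, detr_eq_sum_prod_principalMinor]
  refine natDegree_sum_le_of_forall_le _ _ fun f _ => ?_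
  simpa using (isMonicOfDegree_prod_principalMinor_charmatrix A f).natDegree_eq.le

lemma coeff_chir (r : ℕ) (A : Matrix (Fin n) (Fin n) ℂ) : (chir r A).coeff n = r ^ n := by
  have hcoeff (f : Fin n → Fin r) :
      (∏ c, principalMinor A.charmatrix {j | f j = c}).coeff n = 1 := by
    have hf := isMonicOfDegree_prod_principalMinor_charmatrix A f
    simpa [hf.natDegree_eq] using hf.monic.coeff_natDegree
  simp [chir, detr_eq_sum_prod_principalMinor, finsetSum_coeff, hcoeff]

lemma exists_monotone_map_univ_eq {α : Type*} [LinearOrder α] (m : Multiset α) (hm : m.card = n) :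
    ∃ a : Fin n → α, Monotone a ∧ Finset.univ.val.map a = m := by
  obtain ⟨l, rfl⟩ : ∃ l : List α, l = m := Quot.exists_rep m
  obtain rfl : l.length = n := hm
  refine ⟨l.get ∘ Tuple.sort l.get, Tuple.monotone_sort _, ?_⟩
  have hperm : Finset.univ.val.map (Tuple.sort l.get) = Finset.univ.val :=
    congrArg Finset.val (Finset.map_univ_equiv (Tuple.sort l.get))
  rw [← Multiset.map_map, hperm, Fin.univ_val_map, List.ofFn_get]

lemma exists_monotone_chir_eq_prod (hr : r ≠ 0) (hA : A.IsHermitian) :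
    ∃ a : Fin n → ℝ, Monotone a ∧ chir r A = C ((r : ℂ) ^ n) * ∏ k, (X - C (a k : ℂ)) := by
  have hdeg : (chir r A).natDegree = n :=
    natDegree_eq_of_le_of_coeff_ne_zero (natDegree_chir_le r A) (by simp [coeff_chir, hr])
  have hsplits := IsAlgClosed.splits (chir r A)
  have hreal : ((chir r A).roots.map Complex.re).map ((↑) : ℝ → ℂ) = (chir r A).roots := by
    rw [Multiset.map_map, Multiset.map_congr rfl, Multiset.map_id]
    intro x hx
    have him : x.im = 0 := not_not.1 fun h => eval_chir_ne_zero hr hA h (isRoot_of_mem_roots hx)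
    exact Complex.ext rfl him.symm
  obtain ⟨a, hmono, ha⟩ := exists_monotone_map_univ_eq ((chir r A).roots.map Complex.re)
    (by rw [Multiset.card_map, ← hsplits.natDegree_eq_card_roots, hdeg])
  refine ⟨a, hmono, ?_⟩
  conv_lhs => rw [hsplits.eq_prod_roots, leadingCoeff, hdeg, coeff_chir, ← hreal, ← ha]
  rw [Multiset.map_map, Multiset.map_map]
  rfl

end Roots

section Interlacing

open Complex Filter Topology
open scoped Real

lemma ofReal_add_I_eq_mul_exp (u : ℝ) :
    (u : ℂ) + I = √(1 + u ^ 2) * exp ((π / 2 - Real.arctan u : ℝ) * I) := by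
  have hsqrt : √(1 + u ^ 2) ≠ 0 := by positivity
  apply Complex.ext
  · rw [re_ofReal_mul, exp_ofReal_mul_I_re, Real.cos_pi_div_two_sub, Real.sin_arctan]
    field_simp
    simp
  · rw [im_ofReal_mul, exp_ofReal_mul_I_im, Real.sin_pi_div_two_sub, Real.cos_arctan]
    field_simp
    simp

lemma tendsto_arctan_mul_atTop (u : ℝ) :
    Tendsto (fun s : ℝ => Real.arctan (s * u)) atTop (𝓝 (π / 2 * Real.sign u)) := by
  rcases lt_trichotomy u 0 with hu | rfl | hu
  · rw [Real.sign_of_neg hu, mul_neg_one]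
    exact (Real.tendsto_arctan_atBot.mono_right nhdsWithin_le_nhds).comp
      (tendsto_id.atTop_mul_const_of_neg hu)
  · simp
  · rw [Real.sign_of_pos hu, mul_one]
    exact (Real.tendsto_arctan_atTop.mono_right nhdsWithin_le_nhds).comp
      (tendsto_id.atTop_mul_const hu)

lemma mem_Ioo_zero_pi_of_sin_pos {θ : ℝ → ℝ} (hθ : Continuous θ) (h0 : θ 0 ∈ Set.Ioo 0 π)
    (hsin : ∀ s, 0 < s → 0 < Real.sin (θ s)) {s : ℝ} (hs : 0 < s) : θ s ∈ Set.Ioo 0 π := by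
  have hne (y : ℝ) (hy : Real.sin y = 0) (hy0 : θ 0 ≠ y) : y ∉ Set.uIcc (θ 0) (θ s) := by
    intro hmem
    obtain ⟨t, ht, rfl⟩ := intermediate_value_uIcc hθ.continuousOn hmem
    rw [Set.uIcc_of_le hs.le] at ht
    exact (hsin t (ht.1.lt_of_ne (by rintro rfl; exact hy0 rfl))).ne' hy
  constructor
  · by_contra! hle
    exact hne 0 Real.sin_zero h0.1.ne' (Set.mem_uIcc.2 (.inr ⟨hle, h0.1.le⟩))
  · by_contra! hle
    exact hne π Real.sin_pi h0.2.ne (Set.mem_uIcc.2 (.inl ⟨h0.2.le, hle⟩))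

/-- An argument of `∏ k, (x + I / s - a k)` for `s > 0`. It extends continuously to `s = 0`, and
its limit as `s → ∞` records the position of `x` among the `a k`. -/
noncomputable def prodArg {κ : Type*} [Fintype κ] (a : κ → ℝ) (x s : ℝ) : ℝ :=
  ∑ k, (π / 2 - Real.arctan (s * (x - a k)))

section ProdArg

variable {κ κ' : Type*} [Fintype κ] [Fintype κ']

lemma continuous_prodArg (a : κ → ℝ) (x : ℝ) : Continuous (prodArg a x) := by
  unfold prodArg
  fun_prop

lemma prodArg_zero (a : κ → ℝ) (x : ℝ) : prodArg a x 0 = Fintype.card κ * (π / 2) := by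
  simp [prodArg]

lemma tendsto_prodArg_atTop (a : κ → ℝ) (x : ℝ) :
    Tendsto (prodArg a x) atTop
      (𝓝 (Fintype.card κ * (π / 2) - π / 2 * ∑ k, Real.sign (x - a k))) := by
  have hlim : ∑ k, (π / 2 - π / 2 * Real.sign (x - a k)) =
      Fintype.card κ * (π / 2) - π / 2 * ∑ k, Real.sign (x - a k) := by
    simp [Finset.mul_sum]
  rw [← hlim]
  exact tendsto_finsetSum _ fun k _ => (tendsto_arctan_mul_atTop (x - a k)).const_sub _

lemma exists_pos_prod_eq_mul_exp_prodArg (a : κ → ℝ) (x : ℝ) {s : ℝ} (hs : 0 < s) :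
    ∃ ρ : ℝ, 0 < ρ ∧ ∏ k, (x + I / s - a k : ℂ) = ρ * exp (prodArg a x s * I) := by
  have hs' : (s : ℂ) ≠ 0 := ofReal_ne_zero.2 hs.ne'
  have hfactor (k : κ) : (x + I / s - a k : ℂ) =
      (√(1 + (s * (x - a k)) ^ 2) / s : ℝ) *
        exp ((π / 2 - Real.arctan (s * (x - a k)) : ℝ) * I) := by
    rw [ofReal_div, div_mul_eq_mul_div, ← ofReal_add_I_eq_mul_exp]
    push_cast
    field_simp
    ring
  refine ⟨∏ k, √(1 + (s * (x - a k)) ^ 2) / s, Finset.prod_pos fun k _ => by positivity, ?_⟩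
  simp only [hfactor, Finset.prod_mul_distrib, ← exp_sum, ← Finset.sum_mul, prodArg, ofReal_prod,
    ofReal_sum]

lemma sin_prodArg_sub_prodArg_pos {a : κ → ℝ} {b : κ' → ℝ}
    (h : ∀ z : ℂ, 0 < z.im → 0 < ((∏ k, (z - a k)) / ∏ k, (z - b k)).im)
    (x : ℝ) {s : ℝ} (hs : 0 < s) : 0 < Real.sin (prodArg a x s - prodArg b x s) := by
  obtain ⟨ρ, hρ, ha⟩ := exists_pos_prod_eq_mul_exp_prodArg a x hs
  obtain ⟨ρ', hρ', hb⟩ := exists_pos_prod_eq_mul_exp_prodArg b x hs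
  have hpos := h (x + I / s) (by simpa [← ofReal_inv, div_eq_mul_inv] using hs)
  rw [ha, hb, mul_div_mul_comm, ← exp_sub, ← sub_mul, ← ofReal_sub, ← ofReal_div, im_ofReal_mul,
    exp_ofReal_mul_I_im] at hpos
  exact pos_of_mul_pos_right hpos (div_pos hρ hρ').le

lemma abs_sum_sign_sub_sum_sign_le_one {a : κ → ℝ} {b : κ' → ℝ}
    (hcard : Fintype.card κ = Fintype.card κ' + 1)
    (h : ∀ z : ℂ, 0 < z.im → 0 < ((∏ k, (z - a k)) / ∏ k, (z - b k)).im) (x : ℝ) :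
    |∑ k, Real.sign (x - a k) - ∑ k, Real.sign (x - b k)| ≤ 1 := by
  have hzero : prodArg a x 0 - prodArg b x 0 = π / 2 := by
    rw [prodArg_zero, prodArg_zero, hcard]
    push_cast
    ring
  have hmem {s : ℝ} (hs : 0 < s) : prodArg a x s - prodArg b x s ∈ Set.Ioo 0 π :=
    mem_Ioo_zero_pi_of_sin_pos ((continuous_prodArg a x).sub (continuous_prodArg b x))
      (by rw [Pi.sub_apply, hzero]; constructor <;> linarith [Real.pi_pos])
      (fun s hs => sin_prodArg_sub_prodArg_pos h x hs) hs
  have hlim := isClosed_Icc.mem_of_tendsto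
    ((tendsto_prodArg_atTop a x).sub (tendsto_prodArg_atTop b x))
    ((eventually_gt_atTop 0).mono fun s hs => Set.Ioo_subset_Icc_self (hmem hs))
  rw [hcard, Nat.cast_add_one] at hlim
  rw [abs_le]
  constructor <;> nlinarith [hlim.1, hlim.2, Real.pi_pos]

end ProdArg

lemma sum_ite_one_neg_one {κ : Type*} [Fintype κ] (p : κ → Prop) [DecidablePred p] :
    ∑ j, (if p j then 1 else -1 : ℝ) = 2 * Finset.card {j | p j} - Fintype.card κ := by
  have hite (j : κ) : (if p j then 1 else -1 : ℝ) = 2 * (if p j then 1 else 0) - 1 := by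
    split_ifs <;> norm_num
  simp only [hite, Finset.sum_sub_distrib, ← Finset.mul_sum, Finset.sum_boole]
  simp

lemma sum_sign_sub_le_of_lt {m : ℕ} {a : Fin m → ℝ} (ha : Monotone a) {k : Fin m} {x : ℝ}
    (hx : x < a k) : ∑ j, Real.sign (x - a j) ≤ 2 * k - m := by
  have hle (j : Fin m) : Real.sign (x - a j) ≤ if j < k then 1 else -1 := by
    split_ifs with hj
    · rcases Real.sign_apply_eq (x - a j) with h | h | h <;> norm_num [h]
    · rw [Real.sign_of_neg (sub_neg.2 (hx.trans_le (ha (not_lt.1 hj))))]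
  refine (Finset.sum_le_sum fun j _ => hle j).trans_eq ?_
  simp [sum_ite_one_neg_one, Finset.filter_gt_eq_Iio]

lemma le_sum_sign_sub_of_lt {m : ℕ} {a : Fin m → ℝ} (ha : Monotone a) {k : Fin m} {x : ℝ}
    (hx : a k < x) : 2 * (k + 1) - m ≤ ∑ j, Real.sign (x - a j) := by
  have hle (j : Fin m) : (if j ≤ k then 1 else -1) ≤ Real.sign (x - a j) := by
    split_ifs with hj
    · rw [Real.sign_of_pos (sub_pos.2 ((ha hj).trans_lt hx))]
    · rcases Real.sign_apply_eq (x - a j) with h | h | h <;> norm_num [h]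
  refine Eq.trans_le ?_ (Finset.sum_le_sum fun j _ => hle j)
  simp [sum_ite_one_neg_one, Finset.filter_ge_eq_Iic]

lemma interlacing_of_im_prod_div_prod_pos {n : ℕ} {lam : Fin (n + 1) → ℝ} {mu : Fin n → ℝ}
    (hlam : Monotone lam) (hmu : Monotone mu)
    (h : ∀ z : ℂ, 0 < z.im → 0 < ((∏ k, (z - lam k)) / ∏ k, (z - mu k)).im) (k : Fin n) :
    lam k.castSucc ≤ mu k ∧ mu k ≤ lam k.succ := by
  have hsign (x : ℝ) := abs_le.1 (abs_sum_sign_sub_sum_sign_le_one (by simp) h x)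
  constructor <;> by_contra! hlt <;> obtain ⟨x, hx, hx'⟩ := exists_between hlt
  · have hlow := sum_sign_sub_le_of_lt hlam hx'
    have hhigh := le_sum_sign_sub_of_lt hmu hx
    push_cast [Fin.val_castSucc] at hlow
    linarith [(hsign x).1]
  · have hlow := sum_sign_sub_le_of_lt hmu hx'
    have hhigh := le_sum_sign_sub_of_lt hlam hx
    push_cast [Fin.val_succ] at hhigh
    linarith [(hsign x).2]

end Interlacing

/-- Cauchy interlacing for the `r`-characteristic polynomial: for a Hermitian matrix `A`
of size `n+1 ≥ 2`, `χ_r[A]` has `n+1` real roots `λ₁ ≤ ⋯ ≤ λ_{n+1}` (with multiplicity,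
and leading coefficient `r^{n+1}`), `χ_r[A_i]` has `n` real roots `μ₁ ≤ ⋯ ≤ μ_n`, and
`λ_k ≤ μ_k ≤ λ_{k+1}` for all `k`. -/
theorem chir_cauchy_interlacing {n : ℕ} (hn : 1 ≤ n) (r : ℕ) (hr : 1 ≤ r)
    (A : Matrix (Fin (n+1)) (Fin (n+1)) ℂ) (hA : A.IsHermitian) (i : Fin (n+1)) :
    ∃ lam : Fin (n+1) → ℝ, ∃ mu : Fin n → ℝ,
      Monotone lam ∧ Monotone mu ∧
      chir r A
        = Polynomial.C ((r : ℂ)^(n+1)) * ∏ k : Fin (n+1), (Polynomial.X - Polynomial.C ((lam k : ℝ) : ℂ)) ∧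
      chir r (A.submatrix i.succAbove i.succAbove)
        = Polynomial.C ((r : ℂ)^n) * ∏ k : Fin n, (Polynomial.X - Polynomial.C ((mu k : ℝ) : ℂ)) ∧
      ∀ k : Fin n, lam k.castSucc ≤ mu k ∧ mu k ≤ lam k.succ := by
  have hr0 : r ≠ 0 := Nat.one_le_iff_ne_zero.1 hr
  obtain ⟨lam, hlam, hchi⟩ := exists_monotone_chir_eq_prod hr0 hA
  obtain ⟨mu, hmu, hchi'⟩ := exists_monotone_chir_eq_prod hr0 (hA.submatrix i.succAbove)
  refine ⟨lam, mu, hlam, hmu, hchi, hchi', interlacing_of_im_prod_div_prod_pos hlam hmu ?_⟩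
  intro z hz
  have hpos := im_eval_chir_div_eval_chir_submatrix_succAbove_pos hr0 hA i hz
  have hlead : (r : ℂ) ^ (n + 1) / r ^ n = (r : ℝ) := by
    rw [pow_succ', mul_div_cancel_right₀ _ (pow_ne_zero n (Nat.cast_ne_zero.2 hr0))]
    simp
  simp only [hchi, hchi', eval_mul, eval_C, eval_prod, eval_sub, eval_X] at hpos
  rw [mul_div_mul_comm, hlead, Complex.im_ofReal_mul] at hpos
  exact pos_of_mul_pos_right hpos r.cast_nonneg
end

section
/- Let A be an n×n complex Hermitian positive semidefinite matrix and let r ≥ 1 be an integer. Then for any two subsets S, T ⊆ {1,…,n}, the quantities det_r(A(S)), det_r(A(T)), det_r(A(S∪T)), det_r(A(S∩T)) are nonnegative real numbers and det_r(A(S)) · det_r(A(T)) ≥ det_r(A(S∪T)) · det_r(A(S∩T)). -/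
open Polynomial Matrix
open scoped ComplexOrder

/-- The principal submatrix of `A` with rows and columns indexed by `T`. -/
def psub {n : ℕ} (A : Matrix (Fin n) (Fin n) ℂ) (T : Finset (Fin n)) :
    Matrix ↥T ↥T ℂ :=
  A.submatrix (fun x : ↥T => (x : Fin n)) (fun x : ↥T => (x : Fin n))

/-!
Expanding `r ^ c(σ)` as the number of `σ`-invariant colourings of the indices by `r` colours shows
that `det_r M` is the sum, over all colourings, of the determinants of the block diagonal parts of
`M`. This sum does not vanish when `M` is strictly accretive: choose the colours one index `e` at a
time. Replacing the entry `M e e` by `M e e + z` changes the partial sum `a_c` in which `e` has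
colour `c` to `a_c + z * b`, where `b` does not depend on `c`; as this is nonzero for `0 ≤ re z`,
every `a_c / b` has positive real part, and so does `∑ c, a_c / b`.

For `A` positive definite, rotating the half-plane makes `det_r (A + z E_ii + w E_jj)` a real
polynomial in `z` and `w` without zeros in the product of the upper half-planes. Such a polynomial
`a + b z + b' w + c z w` satisfies `a c ≤ b b'`, which is the inequality for `S` and `T` differing
from `S ∪ T` by one element each. These local inequalities imply the lattice inequality, and the
positive semidefinite case follows by perturbing `A` to `A + ε • 1`.
-/

section Submodular

variable {α G : Type*} [DecidableEq α] [CommGroup G] [PartialOrder G] [IsOrderedMonoid G]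
  {f : Finset α → G}

lemma insert_div_le_insert_div_of_subset
    (hf : ∀ R i j, i ∉ R → j ∉ R → i ≠ j →
      f (insert i (insert j R)) * f R ≤ f (insert i R) * f (insert j R))
    {R U : Finset α} (hRU : R ⊆ U) {i : α} (hi : i ∉ U) :
    f (insert i U) / f U ≤ f (insert i R) / f R := by
  suffices ∀ V : Finset α, Disjoint R V → i ∉ R ∪ V →
      f (insert i (R ∪ V)) / f (R ∪ V) ≤ f (insert i R) / f R by
    have hU : R ∪ U \ R = U := Finset.union_sdiff_of_subset hRU
    simpa only [hU] using this (U \ R) Finset.disjoint_sdiff (hU.symm ▸ hi)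
  intro V
  induction V using Finset.induction_on with
  | empty => simp
  | insert j V hj ih =>
    intro hRV hiV
    obtain ⟨hjR, hRV⟩ := Finset.disjoint_insert_right.1 hRV
    simp only [Finset.union_insert, Finset.mem_insert, not_or] at hiV ⊢
    have marginal_le : f (insert i (insert j (R ∪ V))) / f (insert j (R ∪ V)) ≤
        f (insert i (R ∪ V)) / f (R ∪ V) :=
      div_le_div_iff'.2 (hf _ i j hiV.2 (by simp [hj, hjR]) hiV.1)
    exact marginal_le.trans (ih hRV hiV.2)

theorem union_mul_inter_le_of_insert
    (hf : ∀ R i j, i ∉ R → j ∉ R → i ≠ j →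
      f (insert i (insert j R)) * f R ≤ f (insert i R) * f (insert j R))
    (S T : Finset α) : f (S ∪ T) * f (S ∩ T) ≤ f S * f T := by
  suffices ∀ V, Disjoint S V → f (S ∪ V) / f S ≤ f ((S ∩ T) ∪ V) / f (S ∩ T) by
    have hT : (S ∩ T) ∪ (T \ S) = T := by grind
    rw [mul_comm (f S), ← div_le_div_iff']
    simpa [hT] using this (T \ S) Finset.disjoint_sdiff
  intro V
  induction V using Finset.induction_on with
  | empty => simp
  | insert i V hi ih =>
    intro hSV
    obtain ⟨hiS, hSV⟩ := Finset.disjoint_insert_right.1 hSV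
    have marginal_le : f (insert i (S ∪ V)) / f (S ∪ V) ≤
        f (insert i (S ∩ T ∪ V)) / f (S ∩ T ∪ V) :=
      insert_div_le_insert_div_of_subset hf
        (Finset.union_subset_union_left Finset.inter_subset_left) (by simp [hi, hiS])
    simpa only [Finset.union_insert, div_mul_div_cancel] using mul_le_mul' marginal_le (ih hSV)

end Submodular

section CycleCount

open Equiv.Perm

variable {ι : Type*} [Fintype ι] [DecidableEq ι]

lemma card_quotient_sameCycle (σ : Equiv.Perm ι) :
    Nat.card (Quotient (SameCycle.setoid σ)) = cycleCount σ := by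
  let label : ι → σ.cycleFactorsFinset ⊕ {x // σ x = x} := fun x =>
    if hx : σ x = x then .inr ⟨x, hx⟩
    else .inl ⟨σ.cycleOf x, cycleOf_mem_cycleFactorsFinset_iff.2 (mem_support.2 hx)⟩
  have label_surjective : Function.Surjective label := by
    rintro (⟨c, hc⟩ | ⟨x, hx⟩)
    · obtain ⟨x, hx⟩ := (mem_cycleFactorsFinset_iff.1 hc).1.nonempty_support
      have hσx : σ x ≠ x := mem_support.1 (mem_cycleFactorsFinset_support_le hc hx)
      exact ⟨x, by simp [label, hσx, ← cycle_is_cycleOf hx hc]⟩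
    · exact ⟨x, dif_pos hx⟩
  have ker_label : Setoid.ker label = SameCycle.setoid σ := by
    ext x y
    change label x = label y ↔ σ.SameCycle x y
    by_cases hx : σ x = x <;> by_cases hy : σ y = y
    · simpa [label, hx, hy] using ⟨fun h => h.sameCycle σ, fun h => h.eq_of_left hx⟩
    · simpa [label, hx, hy] using fun h : σ.SameCycle x y => hy (h.apply_eq_self_iff.1 hx)
    · simpa [label, hx, hy] using fun h : σ.SameCycle x y => hx (h.apply_eq_self_iff.2 hy)
    · simp [label, hx, hy, sameCycle_iff_cycleOf_eq_of_mem_support (mem_support.2 hx)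
        (mem_support.2 hy)]
  have card_fixed : Fintype.card {x // σ x = x} = Fintype.card ι - σ.support.card := by
    rw [← Finset.card_compl, Fintype.card_subtype]
    congr 1
    ext x
    simp
  rw [← ker_label, Nat.card_congr (Setoid.quotientKerEquivOfSurjective _ label_surjective)]
  simp [cycleCount, cycleType_def, card_fixed]

lemma card_invariant_colorings (κ : Type*) [Fintype κ] [DecidableEq κ] (σ : Equiv.Perm ι) :
    Fintype.card {f : ι → κ // ∀ i, f i = f (σ i)} = Fintype.card κ ^ cycleCount σ := by
  have invariant_iff (f : ι → κ) :
      (∀ i, f i = f (σ i)) ↔ SameCycle.setoid σ ≤ Setoid.ker f := by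
    refine ⟨fun hf x y hxy => ?_, fun hf i => hf ⟨1, by simp⟩⟩
    obtain ⟨n, rfl⟩ := SameCycle.exists_nat_pow_eq hxy
    clear hxy
    change f x = f _
    induction n with
    | zero => simp
    | succ n ih => rw [ih, hf, pow_succ', mul_apply]
  rw [← Nat.card_eq_fintype_card, Nat.card_congr ((Equiv.subtypeEquivRight invariant_iff).trans
    (Setoid.liftEquiv _)), Nat.card_fun, card_quotient_sameCycle, Nat.card_eq_fintype_card]

end CycleCount

section Pinching

variable {ι κ R : Type*} [DecidableEq κ]

/-- The pinching of `M` along the partition of the index set into the colour classes of `f`: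
entries between indices of different colours are replaced by `0`. -/
def pinching [Zero R] (f : ι → κ) (M : Matrix ι ι R) : Matrix ι ι R :=
  .of fun i j => if f i = f j then M i j else 0

@[simp]
lemma pinching_apply [Zero R] (f : ι → κ) (M : Matrix ι ι R) (i j : ι) :
    pinching f M i j = if f i = f j then M i j else 0 := rfl

lemma pinching_isHermitian [AddMonoid R] [StarAddMonoid R] {M : Matrix ι ι R} (hM : M.IsHermitian)
    (f : ι → κ) : (pinching f M).IsHermitian := by
  ext i j
  simp only [conjTranspose_apply, pinching_apply, eq_comm (a := f j)]
  split_ifs <;> simp [hM.apply]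

lemma pinching_one [DecidableEq ι] [Zero R] [One R] (f : ι → κ) :
    pinching f (1 : Matrix ι ι R) = 1 := by
  ext i j
  obtain rfl | hij := eq_or_ne i j <;> simp [*]

lemma pinching_add_single [DecidableEq ι] [AddMonoid R] (f : ι → κ) (M : Matrix ι ι R) (e : ι)
    (z : R) : pinching f (M + single e e z) = pinching f M + single e e z := by
  ext i j
  simp only [Matrix.add_apply, pinching_apply, single_apply]
  by_cases he : e = i ∧ e = j
  · simp [← he.1, ← he.2]
  · simp [he]

lemma pinching_fromBlocks_zero {ι' : Type*} [Zero R] (f : ι → κ) (g : ι' → κ) (M : Matrix ι ι R)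
    (N : Matrix ι' ι' R) :
    pinching (Sum.elim f g) (fromBlocks M 0 0 N) =
      fromBlocks (pinching f M) 0 0 (pinching g N) := by
  ext (i | i) (j | j)
  · rfl
  · exact ite_self _
  · exact ite_self _
  · rfl

lemma dotProduct_pinching_mulVec [Fintype ι] [Fintype κ] [Semiring R] [StarRing R] (f : ι → κ)
    (M : Matrix ι ι R) (v : ι → R) :
    star v ⬝ᵥ pinching f M *ᵥ v =
      ∑ c, star (fun i => if f i = c then v i else 0) ⬝ᵥ
        M *ᵥ (fun i => if f i = c then v i else 0) := by
  simp only [dotProduct, mulVec, Finset.mul_sum]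
  rw [Finset.sum_comm (s := (Finset.univ : Finset κ))]
  refine Finset.sum_congr rfl fun i _ => ?_
  rw [Finset.sum_comm (s := (Finset.univ : Finset κ))]
  refine Finset.sum_congr rfl fun j _ => ?_
  rw [Finset.sum_eq_single (f i)]
  · simp [eq_comm (a := f i)]
  · intro c _ hc
    simp [hc.symm]
  · simp

lemma pinching_posSemidef [Finite ι] [Finite κ] {𝕜 : Type*} [RCLike 𝕜] {M : Matrix ι ι 𝕜}
    (hM : M.PosSemidef) (f : ι → κ) : (pinching f M).PosSemidef := by
  cases nonempty_fintype ι
  cases nonempty_fintype κ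
  refine .of_dotProduct_mulVec_nonneg (pinching_isHermitian hM.isHermitian f) fun v => ?_
  rw [dotProduct_pinching_mulVec]
  exact Finset.sum_nonneg fun c _ => hM.dotProduct_mulVec_nonneg _

end Pinching

section Detr

variable {ι ι' R : Type*} [Fintype ι] [DecidableEq ι] [Fintype ι'] [DecidableEq ι'] [CommRing R]

theorem detr_eq_sum_det_pinching (r : ℕ) (M : Matrix ι ι R) :
    detr r M = ∑ f : ι → Fin r, (pinching f M).det := by
  have prod_pinching (σ : Equiv.Perm ι) (f : ι → Fin r) :
      ∏ i, pinching f M i (σ i) = if ∀ i, f i = f (σ i) then ∏ i, M i (σ i) else 0 := by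
    simp [Finset.prod_ite_zero]
  simp_rw [← det_transpose (pinching _ M), det_apply', transpose_apply, prod_pinching]
  rw [Finset.sum_comm]
  refine Finset.sum_congr rfl fun σ _ => ?_
  rw [← Finset.mul_sum, ← Finset.sum_filter, Finset.sum_const, ← Fintype.card_subtype,
    card_invariant_colorings, Fintype.card_fin, nsmul_eq_mul, Nat.cast_pow, mul_assoc]

lemma detr_one (r : ℕ) : detr r (1 : Matrix ι ι R) = (r : R) ^ Fintype.card ι := by
  simp [detr_eq_sum_det_pinching, pinching_one]

lemma detr_smul (r : ℕ) (u : R) (M : Matrix ι ι R) :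
    detr r (u • M) = u ^ Fintype.card ι * detr r M := by
  simp only [detr, Matrix.smul_apply, smul_eq_mul, Finset.prod_mul_distrib, Finset.prod_const,
    Finset.card_univ, Finset.mul_sum]
  exact Finset.sum_congr rfl fun σ _ => mul_left_comm _ _ _

lemma detr_submatrix_equiv (r : ℕ) (M : Matrix ι ι R) (e : ι' ≃ ι) :
    detr r (M.submatrix e e) = detr r M := by
  rw [detr_eq_sum_det_pinching, detr_eq_sum_det_pinching]
  refine Fintype.sum_equiv (e.arrowCongr (.refl _)) _ _ fun f => ?_
  rw [← det_submatrix_equiv_self e]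
  congr 1
  ext i j
  simp

lemma detr_fromBlocks_zero (r : ℕ) (M : Matrix ι ι R) (N : Matrix ι' ι' R) :
    detr r (fromBlocks M 0 0 N) = detr r M * detr r N := by
  simp only [detr_eq_sum_det_pinching, Finset.sum_mul_sum, ← Fintype.sum_prod_type']
  refine (Fintype.sum_equiv (Equiv.sumArrowEquivProdArrow ι ι' (Fin r)).symm _ _ fun f => ?_).symm
  rw [← det_fromBlocks_zero₂₁, ← pinching_fromBlocks_zero]
  rfl

lemma continuous_detr [TopologicalSpace R] [IsTopologicalRing R] (r : ℕ) :
    Continuous (detr r : Matrix ι ι R → R) := by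
  unfold detr
  fun_prop

theorem detr_nonneg {𝕜 : Type*} [RCLike 𝕜] (r : ℕ) {A : Matrix ι ι 𝕜} (hA : A.PosSemidef) :
    0 ≤ detr r A := by
  rw [detr_eq_sum_det_pinching]
  exact Finset.sum_nonneg fun f _ => (pinching_posSemidef hA f).det_nonneg

end Detr

section Isolate

variable {ι R : Type*} [DecidableEq ι]

/-- The matrix obtained from `M` by replacing the rows and columns indexed by `D` with those of the
identity. It plays the role of the principal submatrix of `M` on the complement of `D`, without a
change of index type. -/
def isolate [Zero R] [One R] (D : Finset ι) (M : Matrix ι ι R) : Matrix ι ι R :=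
  .of fun i j => if i ∈ D ∨ j ∈ D then (1 : Matrix ι ι R) i j else M i j

@[simp]
lemma isolate_apply [Zero R] [One R] (D : Finset ι) (M : Matrix ι ι R) (i j : ι) :
    isolate D M i j = if i ∈ D ∨ j ∈ D then (1 : Matrix ι ι R) i j else M i j := rfl

lemma isolate_isolate [Zero R] [One R] (D E : Finset ι) (M : Matrix ι ι R) :
    isolate D (isolate E M) = isolate (D ∪ E) M := by
  ext i j
  simp only [isolate_apply, Finset.mem_union]
  grind

lemma pinching_isolate {κ : Type*} [DecidableEq κ] [Zero R] [One R] (f : ι → κ) (D : Finset ι)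
    (M : Matrix ι ι R) : pinching f (isolate D M) = isolate D (pinching f M) := by
  ext i j
  simp only [pinching_apply, isolate_apply, one_apply]
  grind

lemma isolate_add_single [AddMonoidWithOne R] {D : Finset ι} {e : ι} (he : e ∉ D)
    (M : Matrix ι ι R) (z : R) : isolate D (M + single e e z) = isolate D M + single e e z := by
  ext i j
  simp only [isolate_apply, Matrix.add_apply, single_apply]
  by_cases h : e = i ∧ e = j
  · simp [← h.1, ← h.2, he]
  · simp [h]

lemma isolate_isHermitian [Semiring R] [StarRing R] {M : Matrix ι ι R} (hM : M.IsHermitian)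
    (D : Finset ι) : (isolate D M).IsHermitian := by
  ext i j
  simp only [conjTranspose_apply, isolate_apply, or_comm (a := j ∈ D)]
  split_ifs
  · exact isHermitian_one.apply i j
  · exact hM.apply i j

lemma isolate_mulVec [Fintype ι] [Semiring R] (D : Finset ι) (M : Matrix ι ι R) (v : ι → R) :
    isolate D M *ᵥ v = D.piecewise v (M *ᵥ D.piecewise 0 v) := by
  ext i
  simp only [mulVec, dotProduct, isolate_apply]
  by_cases hi : i ∈ D
  · simp [hi, one_apply]
  · simp only [hi, false_or, Finset.piecewise_eq_of_notMem, not_false_eq_true]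
    refine Finset.sum_congr rfl fun j _ => ?_
    by_cases hj : j ∈ D
    · simp [hj, one_apply_ne (ne_of_mem_of_not_mem hj hi).symm]
    · simp [hj]

lemma dotProduct_isolate_mulVec [Fintype ι] [Semiring R] [StarRing R] (D : Finset ι)
    (M : Matrix ι ι R) (v : ι → R) :
    star v ⬝ᵥ isolate D M *ᵥ v =
      star (D.piecewise v 0) ⬝ᵥ D.piecewise v 0 +
        star (D.piecewise 0 v) ⬝ᵥ M *ᵥ D.piecewise 0 v := by
  rw [isolate_mulVec]
  simp only [dotProduct, ← Finset.sum_add_distrib]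
  refine Finset.sum_congr rfl fun i _ => ?_
  by_cases hi : i ∈ D <;> simp [hi]

lemma isolate_compl_eq_submatrix [Fintype ι] [Zero R] [One R] (S : Finset ι) (M : Matrix ι ι R) :
    isolate Sᶜ M = (fromBlocks (M.submatrix (Subtype.val : S → ι) Subtype.val) 0 0 1).submatrix
      (Equiv.sumCompl (· ∈ S)).symm (Equiv.sumCompl (· ∈ S)).symm := by
  ext i j
  by_cases hi : i ∈ S <;> by_cases hj : j ∈ S
  · simp [hi, hj]
  · simp [hi, hj, one_apply_ne (ne_of_mem_of_not_mem hi hj)]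
  · simp [hi, hj, one_apply_ne (ne_of_mem_of_not_mem hj hi).symm]
  · simp [hi, hj, one_apply, Subtype.ext_iff]

/-- The `r`-determinant of the principal submatrix of `M` on `S`, for matrices over any index type
and any commutative ring; `principalDetr r A S` unfolds to `detr r (psub A S)`. -/
noncomputable def principalDetr [CommRing R] (r : ℕ) (M : Matrix ι ι R) (S : Finset ι) : R :=
  detr r (M.submatrix (Subtype.val : S → ι) Subtype.val)

variable [Fintype ι] [CommRing R]

theorem detr_isolate_compl (r : ℕ) (S : Finset ι) (M : Matrix ι ι R) :
    detr r (isolate Sᶜ M) = (r : R) ^ Sᶜ.card * principalDetr r M S := by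
  rw [principalDetr, isolate_compl_eq_submatrix, detr_submatrix_equiv, detr_fromBlocks_zero,
    detr_one, mul_comm]
  simp [Finset.card_compl]

lemma det_add_single (M : Matrix ι ι R) (e : ι) (z : R) :
    (M + single e e z).det = M.det + z * (isolate {e} M).det := by
  have add_single_eq : M + single e e z = M.updateRow e (M e + z • Pi.single e 1) := by
    ext i j
    obtain rfl | hi := eq_or_ne i e
    · simp [single_apply, Pi.single_apply, eq_comm]
    · simp [hi, hi.symm]
  have det_updateRow_eq : (M.updateRow e (Pi.single e 1)).det = (isolate {e} M).det := by
    refine det_eq_of_forall_row_eq_smul_add_const (Function.update (fun i => M i e) e 0) e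
      (by simp) fun i j => ?_
    obtain rfl | hi := eq_or_ne i e
    · simp [Pi.single_apply, one_apply, eq_comm]
    · obtain rfl | hj := eq_or_ne j e
      · simp [hi]
      · simp [hi, hj, hj.symm]
  rw [add_single_eq, det_updateRow_add, updateRow_eq_self, det_updateRow_smul, det_updateRow_eq]

lemma detr_add_single (r : ℕ) (M : Matrix ι ι R) (e : ι) (z : R) :
    detr r (M + single e e z) = detr r M + z * detr r (isolate {e} M) := by
  simp only [detr_eq_sum_det_pinching, pinching_add_single, det_add_single, pinching_isolate,
    Finset.sum_add_distrib, Finset.mul_sum]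

end Isolate

section Accretive

variable {ι : Type*} [Fintype ι] {B : Matrix ι ι ℂ}

/-- A complex matrix is strictly accretive if its numerical range lies in the open right
half-plane. This is the class of matrices, stable under `pinching`, `isolate` and increasing the
real part of a diagonal entry, on which `detr` does not vanish. -/
def IsStrictlyAccretive (B : Matrix ι ι ℂ) : Prop :=
  ∀ v : ι → ℂ, v ≠ 0 → 0 < (star v ⬝ᵥ B *ᵥ v).re

namespace IsStrictlyAccretive

lemma smul_posDef {A : Matrix ι ι ℂ} (hA : A.PosDef) {u : ℂ} (hu : 0 < u.re) :
    IsStrictlyAccretive (u • A) := fun v hv => by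
  obtain ⟨a, ha, hav⟩ := RCLike.pos_iff_exists_ofReal.1 (hA.dotProduct_mulVec_pos hv)
  rw [smul_mulVec, dotProduct_smul, ← hav]
  simpa using mul_pos hu ha

lemma of_posDef {A : Matrix ι ι ℂ} (hA : A.PosDef) : IsStrictlyAccretive A :=
  one_smul ℂ A ▸ smul_posDef hA (u := 1) (by simp)

protected lemma posDef (hB : IsStrictlyAccretive B) (hB' : B.IsHermitian) : B.PosDef :=
  .of_dotProduct_mulVec_pos hB' fun v hv => by
    have := hB'.im_star_dotProduct_mulVec_self v
    exact Complex.pos_iff.2 ⟨hB v hv, this.symm⟩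

lemma re_nonneg (hB : IsStrictlyAccretive B) (v : ι → ℂ) : 0 ≤ (star v ⬝ᵥ B *ᵥ v).re := by
  obtain rfl | hv := eq_or_ne v 0
  · simp
  · exact (hB v hv).le

lemma det_ne_zero [DecidableEq ι] (hB : IsStrictlyAccretive B) : B.det ≠ 0 := fun hdet => by
  obtain ⟨v, hv, hBv⟩ := exists_mulVec_eq_zero_iff.2 hdet
  simpa [hBv] using hB v hv

protected lemma pinching {κ : Type*} [Finite κ] [DecidableEq κ] (hB : IsStrictlyAccretive B)
    (f : ι → κ) : IsStrictlyAccretive (pinching f B) := fun v hv => by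
  cases nonempty_fintype κ
  obtain ⟨i, hi⟩ := Function.ne_iff.1 hv
  rw [dotProduct_pinching_mulVec, Complex.re_sum]
  refine Finset.sum_pos' (fun c _ => hB.re_nonneg _) ⟨f i, Finset.mem_univ _, hB _ fun h => hi ?_⟩
  simpa using congrFun h i

protected lemma isolate [DecidableEq ι] (hB : IsStrictlyAccretive B) (D : Finset ι) :
    IsStrictlyAccretive (isolate D B) := fun v hv => by
  rw [dotProduct_isolate_mulVec, Complex.add_re]
  by_cases hD : (D.piecewise 0 v : ι → ℂ) = 0
  · have hv' : D.piecewise v 0 = v := by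
      ext i
      have := congrFun hD i
      by_cases hi : i ∈ D <;> simp_all
    refine add_pos_of_pos_of_nonneg ?_ (hB.re_nonneg _)
    rw [hv']
    exact (Complex.pos_iff.1 (dotProduct_star_self_pos_iff.2 hv)).1
  · exact add_pos_of_nonneg_of_pos (Complex.nonneg_iff.1 (dotProduct_star_self_nonneg _)).1
      (hB _ hD)

lemma add_single [DecidableEq ι] (hB : IsStrictlyAccretive B) (e : ι) {z : ℂ} (hz : 0 ≤ z.re) :
    IsStrictlyAccretive (B + single e e z) := fun v hv => by
  have single_form : star v ⬝ᵥ single e e z *ᵥ v = Complex.normSq (v e) * z := by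
    rw [single_mulVec, Complex.normSq_eq_conj_mul_self]
    simp only [dotProduct, Pi.star_apply, Function.update_apply, Pi.zero_apply, mul_ite, mul_zero,
      Finset.sum_ite_eq', Finset.mem_univ, if_true, RCLike.star_def]
    ring
  rw [add_mulVec, dotProduct_add, single_form, Complex.add_re, Complex.re_ofReal_mul]
  exact add_pos_of_pos_of_nonneg (hB v hv) (mul_nonneg (Complex.normSq_nonneg _) hz)

end IsStrictlyAccretive

lemma isolate_posDef {ι : Type*} [Finite ι] [DecidableEq ι] {A : Matrix ι ι ℂ} (hA : A.PosDef)
    (D : Finset ι) : (isolate D A).PosDef :=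
  have := Fintype.ofFinite ι
  ((IsStrictlyAccretive.of_posDef hA).isolate D).posDef (isolate_isHermitian hA.isHermitian D)

end Accretive

section PinchingSum

variable {ι κ R : Type*} [Fintype ι] [DecidableEq ι] [Fintype κ] [DecidableEq κ]

/-- The sum of the determinants of the pinchings of `M` along all colourings that agree with `g`
outside `T`. It interpolates between `(pinching g M).det`, for `T = ∅`, and `detr`, for
`T = Finset.univ`. -/
def pinchingSum [CommRing R] (T : Finset ι) (g : ι → κ) (M : Matrix ι ι R) : R :=
  ∑ f : ι → κ with ∀ i ∉ T, f i = g i, (pinching f M).det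

variable [CommRing R] (M : Matrix ι ι R)

lemma pinchingSum_empty (g : ι → κ) : pinchingSum ∅ g M = (pinching g M).det := by
  simp [pinchingSum, ← funext_iff, Finset.sum_filter]

lemma pinchingSum_univ {r : ℕ} (g : ι → Fin r) : pinchingSum Finset.univ g M = detr r M := by
  simp [pinchingSum, detr_eq_sum_det_pinching]

lemma pinchingSum_insert {T : Finset ι} {e : ι} (he : e ∉ T) (g : ι → κ) :
    pinchingSum (insert e T) g M = ∑ c, pinchingSum T (Function.update g e c) M := by
  simp only [pinchingSum]
  rw [← Finset.sum_fiberwise _ (fun f => f e)]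
  refine Finset.sum_congr rfl fun c _ => ?_
  rw [Finset.filter_filter]
  congr 1
  ext f
  simp only [Finset.mem_filter, Finset.mem_univ, true_and, Finset.mem_insert, Function.update_apply]
  grind

lemma pinchingSum_add_single (T : Finset ι) (g : ι → κ) (e : ι) (z : R) :
    pinchingSum T g (M + single e e z) =
      pinchingSum T g M + z * pinchingSum T g (isolate {e} M) := by
  simp only [pinchingSum, pinching_add_single, det_add_single, pinching_isolate,
    Finset.sum_add_distrib, Finset.mul_sum]

lemma pinchingSum_isolate_update (T : Finset ι) (g : ι → κ) (e : ι) (c : κ) :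
    pinchingSum T (Function.update g e c) (isolate {e} M) = pinchingSum T g (isolate {e} M) := by
  induction T using Finset.induction_on generalizing g with
  | empty =>
    simp only [pinchingSum_empty]
    congr 1
    ext i j
    simp only [pinching_apply, isolate_apply, Function.update_apply, one_apply]
    grind
  | insert i T hi ih =>
    simp only [pinchingSum_insert _ hi]
    refine Finset.sum_congr rfl fun d _ => ?_
    obtain rfl | hie := eq_or_ne i e
    · rw [Function.update_idem]
    · rw [Function.update_comm (Ne.symm hie), ih]

end PinchingSum

section Stability

open Filter Topology

lemma re_div_pos_of_forall_add_mul_ne_zero {a b : ℂ} (hb : b ≠ 0)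
    (h : ∀ z : ℂ, 0 ≤ z.re → a + z * b ≠ 0) : 0 < (a / b).re := by
  by_contra! hle
  refine h (-(a / b)) (by simpa using hle) ?_
  rw [neg_mul, div_mul_cancel₀ _ hb, add_neg_cancel]

variable {ι : Type*} [Fintype ι] [DecidableEq ι]

theorem pinchingSum_ne_zero {κ : Type*} [Fintype κ] [DecidableEq κ] [Nonempty κ] {B : Matrix ι ι ℂ}
    (hB : IsStrictlyAccretive B) (T : Finset ι) (g : ι → κ) : pinchingSum T g B ≠ 0 := by
  induction T using Finset.induction_on generalizing B g with
  | empty => exact pinchingSum_empty B g ▸ (hB.pinching g).det_ne_zero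
  | insert e T he ih =>
    have hb : pinchingSum T g (isolate {e} B) ≠ 0 := ih (hB.isolate {e}) g
    have re_quotient_pos (c : κ) : 0 < (pinchingSum T (Function.update g e c) B /
        pinchingSum T g (isolate {e} B)).re :=
      re_div_pos_of_forall_add_mul_ne_zero hb fun z hz => by
        rw [← pinchingSum_isolate_update B T g e c, ← pinchingSum_add_single]
        exact ih (hB.add_single e hz) _
    intro hsum
    have re_sum_pos := Finset.sum_pos (fun c _ => re_quotient_pos c) Finset.univ_nonempty
    rw [← Complex.re_sum, ← Finset.sum_div, ← pinchingSum_insert B he, hsum] at re_sum_pos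
    simp at re_sum_pos

variable {r : ℕ} [NeZero r] {A : Matrix ι ι ℂ}

theorem IsStrictlyAccretive.detr_ne_zero (hA : IsStrictlyAccretive A) : detr r A ≠ 0 :=
  pinchingSum_univ A (0 : ι → Fin r) ▸ pinchingSum_ne_zero hA Finset.univ 0

lemma detr_pos (hA : A.PosDef) : 0 < detr r A :=
  (detr_nonneg r hA.posSemidef).lt_of_ne' <| (IsStrictlyAccretive.of_posDef hA).detr_ne_zero

lemma exists_re_pos_and_re_mul_nonneg {z w : ℂ} (hz : 0 < z.im) (hw : 0 < w.im) :
    ∃ u : ℂ, 0 < u.re ∧ 0 ≤ (u * z).re ∧ 0 ≤ (u * w).re := by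
  have eventually_re_mul_nonneg {z : ℂ} (hz : 0 < z.im) :
      ∀ᶠ δ : ℝ in 𝓝[>] 0, 0 ≤ ((δ - Complex.I : ℂ) * z).re := by
    have : Continuous fun δ : ℝ => ((δ - Complex.I : ℂ) * z).re := by fun_prop
    refine ((this.tendsto 0).mono_left nhdsWithin_le_nhds).eventually_const_le ?_
    simpa using hz
  obtain ⟨δ, hδ, hδz, hδw⟩ := (eventually_mem_nhdsWithin.and
    ((eventually_re_mul_nonneg hz).and (eventually_re_mul_nonneg hw))).exists
  exact ⟨δ - Complex.I, by simpa using hδ, hδz, hδw⟩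

theorem detr_add_single_add_single_ne_zero (hA : A.PosDef) (i j : ι) {z w : ℂ} (hz : 0 < z.im)
    (hw : 0 < w.im) : detr r (A + single i i z + single j j w) ≠ 0 := by
  obtain ⟨u, hu, huz, huw⟩ := exists_re_pos_and_re_mul_nonneg hz hw
  have accretive :=
    ((IsStrictlyAccretive.smul_posDef hA hu).add_single i huz).add_single j huw
  have smul_eq : u • (A + single i i z + single j j w) =
      u • A + single i i (u * z) + single j j (u * w) := by
    simp only [smul_add, smul_single, smul_eq_mul]
  have := accretive.detr_ne_zero (r := r)
  rw [← smul_eq, detr_smul] at this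
  exact right_ne_zero_of_mul this

end Stability

section IsolatedMinors

variable {ι : Type*} [Fintype ι] [DecidableEq ι] {A : Matrix ι ι ℂ}

lemma ofReal_re_detr (r : ℕ) (hA : A.PosSemidef) : ((detr r A).re : ℂ) = detr r A :=
  Complex.ext rfl (Complex.nonneg_iff.1 (detr_nonneg r hA)).2

lemma mul_le_mul_of_bilinear_ne_zero {a b b' c : ℝ}
    (h : ∀ z w : ℂ, 0 < z.im → 0 < w.im → (a + z * b + w * (b' + z * c) : ℂ) ≠ 0) :
    a * c ≤ b * b' := by
  by_contra! hlt
  have hne : (b' + Complex.I * c : ℂ) ≠ 0 := fun h0 => by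
    have hb' : b' = 0 := by simpa using congrArg Complex.re h0
    have hc : c = 0 := by simpa using congrArg Complex.im h0
    simp [hb', hc] at hlt
  refine h Complex.I (-(a + Complex.I * b) / (b' + Complex.I * c)) (by simp) ?_ ?_
  · rw [Complex.div_im, ← sub_div]
    refine div_pos ?_ (Complex.normSq_pos.2 hne)
    simp only [Complex.neg_im, Complex.neg_re, Complex.add_im, Complex.add_re, Complex.mul_im,
      Complex.mul_re, Complex.I_im, Complex.I_re, Complex.ofReal_im, Complex.ofReal_re]
    linarith
  · rw [div_mul_cancel₀ _ hne, add_neg_cancel]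

theorem re_detr_mul_re_detr_isolate_pair_le (r : ℕ) [NeZero r] (hA : A.PosDef) {i j : ι}
    (hij : i ≠ j) :
    (detr r A).re * (detr r (isolate {i, j} A)).re ≤
      (detr r (isolate {i} A)).re * (detr r (isolate {j} A)).re := by
  refine mul_le_mul_of_bilinear_ne_zero fun z w hz hw => ?_
  have detr_ne_zero := detr_add_single_add_single_ne_zero (r := r) hA i j hz hw
  rw [detr_add_single, detr_add_single, isolate_add_single (by simpa using hij), detr_add_single,
    isolate_isolate, Finset.singleton_union] at detr_ne_zero
  simpa only [ofReal_re_detr, hA.posSemidef, (isolate_posDef hA _).posSemidef] using detr_ne_zero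

theorem detr_isolate_union_mul_inter_le (r : ℕ) [NeZero r] (hA : A.PosDef) (D E : Finset ι) :
    detr r (isolate (D ∪ E) A) * detr r (isolate (D ∩ E) A) ≤
      detr r (isolate D A) * detr r (isolate E A) := by
  let f (D : Finset ι) : {x : ℝ // 0 < x} :=
    ⟨(detr r (isolate D A)).re, (Complex.pos_iff.1 (detr_pos (isolate_posDef hA D))).1⟩
  have f_local (R : Finset ι) (i j : ι) (hij : i ≠ j) :
      f (insert i (insert j R)) * f R ≤ f (insert i R) * f (insert j R) := by
    have pair_le := re_detr_mul_re_detr_isolate_pair_le r (isolate_posDef hA R) hij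
    simp only [isolate_isolate, Finset.insert_union, Finset.singleton_union] at pair_le
    rw [mul_comm]
    exact pair_le
  have re_le : (detr r (isolate (D ∪ E) A)).re * (detr r (isolate (D ∩ E) A)).re ≤
      (detr r (isolate D A)).re * (detr r (isolate E A)).re :=
    union_mul_inter_le_of_insert (f := f) (fun R i j _ _ => f_local R i j) D E
  simpa only [Complex.ofReal_mul, ofReal_re_detr, (isolate_posDef hA _).posSemidef] using
    Complex.real_le_real.2 re_le

end IsolatedMinors

section PrincipalDetr

open Filter Topology

variable {ι : Type*} [Finite ι] [DecidableEq ι] {A : Matrix ι ι ℂ}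

theorem principalDetr_union_mul_inter_le_of_posDef (r : ℕ) [NeZero r] (hA : A.PosDef)
    (S T : Finset ι) :
    principalDetr r A (S ∪ T) * principalDetr r A (S ∩ T) ≤
      principalDetr r A S * principalDetr r A T := by
  cases nonempty_fintype ι
  have isolate_le := detr_isolate_union_mul_inter_le r hA Sᶜ Tᶜ
  rw [← Finset.compl_inter, ← Finset.compl_union] at isolate_le
  simp only [detr_isolate_compl, mul_mul_mul_comm _ (principalDetr r A _), ← pow_add] at isolate_le
  rw [Finset.compl_inter, Finset.compl_union, Finset.card_union_add_card_inter,
    mul_comm (principalDetr r A _)] at isolate_le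
  have pow_pos : (0 : ℂ) < (r : ℂ) ^ (Sᶜ.card + Tᶜ.card) := by
    have : 0 < r := NeZero.pos r
    positivity
  exact le_of_mul_le_mul_left isolate_le pow_pos

theorem detr_koteljanskii_general (r : ℕ) (hr : 1 ≤ r) (hA : A.PosSemidef) :
    (∀ S : Finset ι, 0 ≤ principalDetr r A S) ∧
      ∀ S T : Finset ι, principalDetr r A (S ∪ T) * principalDetr r A (S ∩ T) ≤
        principalDetr r A S * principalDetr r A T := by
  refine ⟨fun S => detr_nonneg r (hA.submatrix _), fun S T => ?_⟩
  have : NeZero r := ⟨Nat.one_le_iff_ne_zero.1 hr⟩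
  have tendsto_principalDetr (U : Finset ι) :
      Tendsto (fun ε : ℝ => principalDetr r (A + ε • 1) U) (𝓝[>] 0) (𝓝 (principalDetr r A U)) := by
    have : Continuous fun ε : ℝ => principalDetr r (A + ε • 1) U :=
      (continuous_detr r).comp (by fun_prop)
    simpa using (this.tendsto 0).mono_left nhdsWithin_le_nhds
  refine le_of_tendsto_of_tendsto ((tendsto_principalDetr _).mul (tendsto_principalDetr _))
    ((tendsto_principalDetr _).mul (tendsto_principalDetr _)) ?_
  filter_upwards [self_mem_nhdsWithin] with ε hε
  exact principalDetr_union_mul_inter_le_of_posDef r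
    (.posSemidef_add hA (PosDef.one.smul hε)) S T

end PrincipalDetr

/-- Hadamard–Fischer–Koteljanskii-type inequality for the `r`-determinant of a positive
semidefinite matrix: all the principal `r`-determinants are nonnegative reals and
`det_r(A(S)) det_r(A(T)) ≥ det_r(A(S∪T)) det_r(A(S∩T))`. -/
theorem detr_koteljanskii {n : ℕ} (r : ℕ) (hr : 1 ≤ r)
    (A : Matrix (Fin n) (Fin n) ℂ) (hA : A.PosSemidef) (S T : Finset (Fin n)) :
    ((detr r (psub A S)).im = 0 ∧ 0 ≤ (detr r (psub A S)).re) ∧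
    ((detr r (psub A T)).im = 0 ∧ 0 ≤ (detr r (psub A T)).re) ∧
    ((detr r (psub A (S ∪ T))).im = 0 ∧ 0 ≤ (detr r (psub A (S ∪ T))).re) ∧
    ((detr r (psub A (S ∩ T))).im = 0 ∧ 0 ≤ (detr r (psub A (S ∩ T))).re) ∧
    (detr r (psub A (S ∪ T))).re * (detr r (psub A (S ∩ T))).re ≤
      (detr r (psub A S)).re * (detr r (psub A T)).re := by
  obtain ⟨nonneg, union_mul_inter_le⟩ := detr_koteljanskii_general r hr hA
  have im_eq_zero_and_re_nonneg (U : Finset (Fin n)) :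
      (detr r (psub A U)).im = 0 ∧ 0 ≤ (detr r (psub A U)).re :=
    (Complex.nonneg_iff.1 (nonneg U)).symm.imp_left Eq.symm
  have re_le : (detr r (psub A (S ∪ T)) * detr r (psub A (S ∩ T))).re ≤
      (detr r (psub A S) * detr r (psub A T)).re := (Complex.le_def.1 (union_mul_inter_le S T)).1
  simpa only [im_eq_zero_and_re_nonneg, true_and, Complex.mul_re, mul_zero, sub_zero] using re_le
end

section
/- Let q be a real stable polynomial in the variables z₁,…,z_n whose degree in the variable z_i is at most 2, let z ∈ ℝ^n be above the roots of q, and suppose Φ_q^i(z) > 0. Set δ := 1/(2Φ_q^i(z)). Then z − δe_i is above the roots of ∂_i q (where e_i is the i-th standard basis vector), and for every j ∈ {1,…,n}: Φ_{∂_i q}^j(z − δe_i) ≤ Φ_q^j(z). -/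
open Polynomial

/-- A polynomial with real coefficients is real stable if it has no zero all of whose
coordinates have strictly positive imaginary part. -/
def RealStable {n : ℕ} (p : MvPolynomial (Fin n) ℝ) : Prop :=
  ∀ z : Fin n → ℂ, (∀ k, 0 < (z k).im) → MvPolynomial.aeval z p ≠ 0

/-- `z ∈ ℝ^n` is above the roots of `p` if `p` does not vanish on the nonnegative orthant
based at `z`. -/
def AboveRoots {n : ℕ} (p : MvPolynomial (Fin n) ℝ) (z : Fin n → ℝ) : Prop :=
  ∀ t : Fin n → ℝ, (∀ k, 0 ≤ t k) → MvPolynomial.eval (z + t) p ≠ 0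

/-- The barrier function `Φ_p^i(z) = (∂ᵢp)(z)/p(z)`. -/
noncomputable def Phi {n : ℕ} (p : MvPolynomial (Fin n) ℝ) (i : Fin n) (z : Fin n → ℝ) : ℝ :=
  MvPolynomial.eval z (MvPolynomial.pderiv i p) / MvPolynomial.eval z p

/-!
Let `q` be real stable. The logarithmic derivative `∂ⱼq / q` maps the product of upper half-planes
to the closed lower half-plane. Differentiating its imaginary part at the boundary, in a direction
`v ≥ 0`, shows that `∂ⱼq · ∂ᵥq - ∂ᵥ∂ⱼq · q`, a Wronskian on every line of direction `v`, is
nonnegative on `ℝⁿ`. Hence `Φ_q^j` is nonincreasing along nonnegative directions, and it is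
nonnegative because `Φ_q^j` tends to `0` along `eⱼ`.

If `q` has degree at most two in `zᵢ`, then along `s ↦ z + s eᵢ` this Wronskian is a nonnegative
quadratic `α s² + β s + γ`, so `β² ≤ 4αγ`. Its coefficients are, up to constants, the `2 × 2`
minors of the Taylor coefficients of `q` and `∂ⱼq` at `z`, whence `2α = Φ β - κ γ` with
`Φ = Φ_q^i(z)` and `κ = (∂ᵢ²q / q)(z) ≥ 0`. Therefore `β ≤ 2Φγ` if `β > 0`, and in any case
`δβ ≤ γ` for `δ = 1 / (2Φ)`, which is the asserted inequality after clearing denominators.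
-/

section LineRestriction

open MvPolynomial (pderiv degreeOf)

variable {R K σ : Type*} [CommSemiring R] [CommSemiring K] [Algebra R K]

/-- The restriction of a multivariate polynomial to the line `s ↦ a + s • v`, as a univariate
polynomial in the parameter `s`. The coefficients may be extended from `R` to `K`. -/
noncomputable def lineRestriction (a v : σ → K) : MvPolynomial σ R →ₐ[R] K[X] :=
  MvPolynomial.aeval fun k => C (a k) + C (v k) * X

theorem aeval_lineRestriction {L : Type*} [CommSemiring L] [Algebra R L] [Algebra K L]
    [IsScalarTower R K L] (a v : σ → K) (p : MvPolynomial σ R) (s : L) :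
    aeval s (lineRestriction a v p) =
      MvPolynomial.aeval (fun k => algebraMap K L (a k) + algebraMap K L (v k) * s) p := by
  rw [lineRestriction, ← AlgHom.restrictScalars_apply R (aeval s), ← AlgHom.comp_apply,
    MvPolynomial.comp_aeval]
  simp

theorem eval_lineRestriction (a v : σ → R) (p : MvPolynomial σ R) (s : R) :
    (lineRestriction a v p).eval s = MvPolynomial.eval (a + s • v) p := by
  rw [← coe_aeval_eq_eval, aeval_lineRestriction, MvPolynomial.aeval_eq_eval]
  congr 2 with k
  simp [mul_comm s]

theorem derivative_lineRestriction_single [DecidableEq σ] (a : σ → K) (i : σ)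
    (p : MvPolynomial σ R) :
    derivative (lineRestriction a (Pi.single i 1) p) =
      lineRestriction a (Pi.single i 1) (pderiv i p) := by
  induction p using MvPolynomial.induction_on with
  | C r => simp [lineRestriction]
  | add p q hp hq => simp [hp, hq]
  | mul_X p k hp =>
    have hX : derivative (lineRestriction a (Pi.single i 1) (MvPolynomial.X k : MvPolynomial σ R)) =
        lineRestriction a (Pi.single i 1) (pderiv i (MvPolynomial.X k : MvPolynomial σ R)) := by
      obtain rfl | hk := eq_or_ne k i <;> simp [lineRestriction, *]
    simp only [map_mul, derivative_mul, hp, hX, MvPolynomial.pderiv_mul, map_add]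

theorem natDegree_lineRestriction_single_le [DecidableEq σ] (a : σ → K) (i : σ)
    (p : MvPolynomial σ R) :
    (lineRestriction a (Pi.single i 1) p).natDegree ≤ degreeOf i p := by
  have hfactor (m : σ →₀ ℕ) (k : σ) :
      ((C (a k) + C ((Pi.single i 1 : σ → K) k) * X) ^ m k).natDegree ≤
        if k = i then m i else 0 := by
    split_ifs with hk
    · subst hk
      exact natDegree_pow_le_of_le _ (by compute_degree) |>.trans_eq (mul_one _)
    · simpa [hk] using natDegree_pow_le (p := C (a k)) (n := m k)
  rw [lineRestriction, MvPolynomial.aeval_def, MvPolynomial.eval₂_eq]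
  refine natDegree_sum_le_of_forall_le _ _ fun m hm => ?_
  calc _ ≤ ∑ k ∈ m.support, if k = i then m i else 0 :=
        (natDegree_C_mul_le _ _).trans <|
          (natDegree_prod_le _ _).trans <| Finset.sum_le_sum fun k _ => hfactor m k
    _ ≤ m i := by rw [Finset.sum_ite_eq']; split_ifs <;> simp
    _ ≤ degreeOf i p := MvPolynomial.monomial_le_degreeOf i hm

theorem degreeOf_pderiv_le (i j : σ) (p : MvPolynomial σ R) :
    degreeOf i (pderiv j p) ≤ degreeOf i p := by
  refine MvPolynomial.degreeOf_le_iff.2 fun m hm => ?_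
  have hmem : m + Finsupp.single j 1 ∈ p.support := by
    rw [MvPolynomial.mem_support_iff, MvPolynomial.coeff_pderiv] at hm
    exact MvPolynomial.mem_support_iff.2 (left_ne_zero_of_mul hm)
  exact (Nat.le_add_right _ _).trans (MvPolynomial.monomial_le_degreeOf i hmem)

theorem pderiv_comm {R : Type*} [CommRing R] (i j : σ) (p : MvPolynomial σ R) :
    pderiv i (pderiv j p) = pderiv j (pderiv i p) := by
  classical
  have hcomm : ⁅pderiv (R := R) i, pderiv (R := R) j⁆ = 0 :=
    MvPolynomial.derivation_ext fun k => by
      simp only [Derivation.commutator_apply, MvPolynomial.pderiv_X, Pi.single_apply,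
        apply_ite (pderiv _), Derivation.map_one_eq_zero, map_zero, ite_self, sub_self,
        Derivation.zero_apply]
  simpa [Derivation.commutator_apply, sub_eq_zero] using DFunLike.congr_fun hcomm p

theorem sub_single_eq_add_neg_smul {R : Type*} [Ring R] [DecidableEq σ] (a : σ → R) (i : σ)
    (δ : R) : a - Pi.single i δ = a + (-δ) • Pi.single i 1 := by
  rw [neg_smul, ← Pi.single_smul, smul_eq_mul, mul_one, sub_eq_add_neg]

end LineRestriction

section Univariate

open Complex Filter Topology ComplexConjugate

theorem im_eval_derivative_mul_conj_eval_nonpos {p : ℂ[X]} {z : ℂ}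
    (hroots : ∀ r, p.IsRoot r → r.im ≤ z.im) :
    (p.derivative.eval z * conj (p.eval z)).im ≤ 0 := by
  by_cases hz : p.eval z = 0
  · simp [hz]
  have hdiv : (p.derivative.eval z / p.eval z).im ≤ 0 := by
    rw [(IsAlgClosed.splits p).eval_derivative_div_eval_of_ne_zero hz, ← coe_imAddGroupHom,
      map_multiset_sum, Multiset.map_map]
    refine (Multiset.sum_le_card_nsmul _ 0 fun y hy => ?_).trans_eq (smul_zero _)
    obtain ⟨r, hr, rfl⟩ := Multiset.mem_map.1 hy
    simpa [inv_im] using div_nonpos_of_nonpos_of_nonneg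
      (sub_nonpos.2 (hroots r (isRoot_of_mem_roots hr))) (normSq_nonneg (z - r))
  have hmul : p.derivative.eval z * conj (p.eval z) =
      p.derivative.eval z / p.eval z * (normSq (p.eval z) : ℂ) := by
    rw [← mul_conj]
    field_simp
  rw [hmul, im_mul_ofReal]
  exact mul_nonpos_of_nonpos_of_nonneg hdiv (normSq_nonneg _)

/- Along `s ↦ x + s * I` the imaginary part in the hypothesis vanishes at `s = 0`, and its
derivative there is `-(wronskian g f).eval x`. -/
theorem eval_wronskian_nonneg_of_im_nonpos {f g : ℝ[X]} {x : ℝ}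
    (him : ∀ s : ℝ, 0 < s → (aeval (x + s * I) g * conj (aeval (x + s * I) f)).im ≤ 0) :
    0 ≤ (wronskian g f).eval x := by
  have hreal (p : ℝ[X]) : aeval (x : ℂ) p = (p.eval x : ℝ) :=
    aeval_algebraMap_apply_eq_algebraMap_eval x p
  have hpath (p : ℝ[X]) : HasDerivAt (fun s : ℝ => aeval (x + s * I) p)
      ((p.derivative.eval x : ℝ) * I) 0 := by
    have hline : HasDerivAt (fun s : ℂ => x + s * I) I ((0 : ℝ) : ℂ) := by
      simpa using ((hasDerivAt_id (0 : ℂ)).mul_const I).const_add (x : ℂ)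
    simpa [Function.comp_def, hreal] using ((p.hasDerivAt_aeval _).comp _ hline).comp_ofReal
  have hderiv : HasDerivAt
      (fun s : ℝ => (aeval (x + s * I) g * conj (aeval (x + s * I) f)).im)
      (-(wronskian g f).eval x) 0 := by
    refine (imCLM.hasFDerivAt.comp_hasDerivAt (0 : ℝ)
      ((hpath g).mul (hpath f).star)).congr_deriv ?_
    simp [wronskian, hreal, mul_comm, ← sub_eq_add_neg]
  rw [← neg_nonpos]
  refine le_of_tendsto (hderiv.tendsto_slope.mono_left (nhdsGT_le_nhdsNE 0)) ?_
  filter_upwards [self_mem_nhdsWithin] with s hs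
  simpa [slope_def_field, hreal] using
    div_nonpos_of_nonpos_of_nonneg (him s hs) (le_of_lt hs)

theorem antitoneOn_eval_div_eval {f g : ℝ[X]} {S : Set ℝ} (hS : Convex ℝ S)
    (hf : ∀ x ∈ S, f.eval x ≠ 0) (hW : ∀ x ∈ S, 0 ≤ (wronskian g f).eval x) :
    AntitoneOn (fun x => g.eval x / f.eval x) S := by
  have hderiv (x : ℝ) (hx : x ∈ S) : HasDerivAt (fun x => g.eval x / f.eval x)
      (-(wronskian g f).eval x / f.eval x ^ 2) x := by
    refine ((g.hasDerivAt x).div (f.hasDerivAt x) (hf x hx)).congr_deriv ?_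
    simp [wronskian]
  refine antitoneOn_of_hasDerivWithinAt_nonpos hS
    (fun x hx => (hderiv x hx).continuousAt.continuousWithinAt)
    (fun x hx => (hderiv x (interior_subset hx)).hasDerivWithinAt) fun x hx => ?_
  exact div_nonpos_of_nonpos_of_nonneg (neg_nonpos.2 (hW x (interior_subset hx))) (sq_nonneg _)

theorem tendsto_eval_derivative_div_eval_atTop {K : Type*} [NormedField K] [LinearOrder K]
    [IsStrictOrderedRing K] [OrderTopology K] (f : K[X]) :
    Tendsto (fun x => f.derivative.eval x / f.eval x) atTop (𝓝 0) := by
  obtain rfl | hf := eq_or_ne f 0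
  · simp
  · exact div_tendsto_atTop_zero_of_degree_lt _ _ (degree_derivative_lt hf)

end Univariate

section DegreeTwo

theorem eval_derivative_of_natDegree_le_two {R : Type*} [CommSemiring R] {f : R[X]}
    (hf : f.natDegree ≤ 2) (x : R) :
    f.derivative.eval x = f.derivative.eval 0 + x * f.derivative.derivative.eval 0 := by
  rw [eq_quadratic_of_degree_le_two (natDegree_le_iff_degree_le.1 hf)]
  simp only [derivative_add, derivative_C_mul, derivative_X_sq, derivative_X, derivative_C, mul_one,
    add_zero, eval_add, eval_mul, eval_C, eval_X, mul_zero, zero_add]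
  ring

variable {K : Type*} [Field K]

theorem eval_of_natDegree_le_two [NeZero (2 : K)] {f : K[X]} (hf : f.natDegree ≤ 2) (x : K) :
    f.eval x = f.eval 0 + x * f.derivative.eval 0 + x ^ 2 / 2 * f.derivative.derivative.eval 0 := by
  rw [eq_quadratic_of_degree_le_two (natDegree_le_iff_degree_le.1 hf)]
  simp only [derivative_add, derivative_C_mul, derivative_X_sq, derivative_X, derivative_C, mul_one,
    add_zero, eval_add, eval_mul, eval_pow, eval_C, eval_X, mul_zero, zero_add, ne_eq,
    OfNat.ofNat_ne_zero, not_false_eq_true, zero_pow]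
  field_simp
  ring

theorem eval_wronskian_of_natDegree_le_two [NeZero (2 : K)] {f g : K[X]} (hf : f.natDegree ≤ 2)
    (hg : g.natDegree ≤ 2) (x : K) :
    (wronskian g f).eval x =
      (g.derivative.eval 0 * f.derivative.derivative.eval 0 -
          g.derivative.derivative.eval 0 * f.derivative.eval 0) / 2 * (x * x) +
        (g.eval 0 * f.derivative.derivative.eval 0 -
          g.derivative.derivative.eval 0 * f.eval 0) * x +
        (g.eval 0 * f.derivative.eval 0 - g.derivative.eval 0 * f.eval 0) := by
  rw [wronskian, eval_sub, eval_mul, eval_mul, eval_of_natDegree_le_two hf,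
    eval_of_natDegree_le_two hg, eval_derivative_of_natDegree_le_two hf x,
    eval_derivative_of_natDegree_le_two hg x]
  field_simp
  ring

variable [LinearOrder K] [IsStrictOrderedRing K]

theorem eval_derivative_neg_div_eval_zero_pos {f : K[X]} (hf : f.natDegree ≤ 2)
    (hpos : 0 < f.derivative.eval 0 / f.eval 0) (hW : 0 ≤ (wronskian f.derivative f).eval 0)
    {δ : K} (hδ : 0 ≤ δ) (hδlt : δ * (f.derivative.eval 0 / f.eval 0) < 1) :
    0 < f.derivative.eval (-δ) / f.eval 0 := by
  set φ := f.derivative.eval 0 / f.eval 0 with hφ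
  have hc : f.eval 0 ≠ 0 := (div_ne_zero_iff.1 hpos.ne').2
  have hsecond : f.derivative.derivative.eval 0 / f.eval 0 ≤ φ ^ 2 := by
    simp only [wronskian, eval_sub, eval_mul, sub_nonneg] at hW
    rw [hφ, pow_two, div_mul_div_comm, ← mul_div_mul_right _ _ hc]
    exact div_le_div_of_nonneg_right hW (mul_self_nonneg _)
  calc 0 < φ * (1 - δ * φ) := mul_pos hpos (sub_pos.2 hδlt)
    _ = φ - δ * φ ^ 2 := by ring
    _ ≤ φ - δ * (f.derivative.derivative.eval 0 / f.eval 0) := by gcongr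
    _ = f.derivative.eval (-δ) / f.eval 0 := by
      rw [eval_derivative_of_natDegree_le_two hf, hφ]
      ring

theorem mul_le_of_forall_quadratic_nonneg {α β γ φ κ δ : K}
    (hquad : ∀ x : K, 0 ≤ α * (x * x) + β * x + γ) (hα : 2 * α = φ * β - κ * γ) (hκ : 0 ≤ κ)
    (hδ : 0 ≤ δ) (hδle : 2 * δ * φ ≤ 1) : δ * β ≤ γ := by
  have hγ : 0 ≤ γ := by simpa using hquad 0
  obtain hβ | hβ := le_or_gt β 0
  · exact (mul_nonpos_of_nonneg_of_nonpos hδ hβ).trans hγ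
  have hdiscrim : β ^ 2 ≤ 4 * α * γ := sub_nonpos.1 (discrim_le_zero hquad)
  have hβle : β ≤ 2 * φ * γ := by
    refine le_of_mul_le_mul_right ?_ hβ
    linear_combination hdiscrim + 2 * γ * hα + 2 * mul_nonneg hκ (sq_nonneg γ)
  calc δ * β ≤ δ * (2 * φ * γ) := by gcongr
    _ = 2 * δ * φ * γ := by ring
    _ ≤ 1 * γ := by gcongr
    _ = γ := one_mul γ

theorem eval_derivative_derivative_div_eval_zero_nonneg {f : K[X]} (hf : f.natDegree ≤ 2)
    (hpos : 0 < f.derivative.eval 0 / f.eval 0) (hf' : ∀ x, 0 ≤ x → f.derivative.eval x ≠ 0) :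
    0 ≤ f.derivative.derivative.eval 0 / f.eval 0 := by
  by_contra! hneg
  have hsign : f.derivative.derivative.eval 0 / f.derivative.eval 0 < 0 := by
    rw [← div_div_div_cancel_right₀ (div_ne_zero_iff.1 hpos.ne').2]
    exact div_neg_of_neg_of_pos hneg hpos
  have hsecond : f.derivative.derivative.eval 0 ≠ 0 := (div_ne_zero_iff.1 hsign.ne).1
  refine hf' (-(f.derivative.derivative.eval 0 / f.derivative.eval 0)⁻¹)
    (neg_nonneg.2 (inv_nonpos.2 hsign.le)) ?_
  rw [eval_derivative_of_natDegree_le_two hf, inv_div]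
  field_simp
  ring

theorem eval_derivative_div_eval_derivative_neg_le {f g : K[X]} (hf : f.natDegree ≤ 2)
    (hg : g.natDegree ≤ 2) (hpos : 0 < f.derivative.eval 0 / f.eval 0)
    (hf' : ∀ x, 0 ≤ x → f.derivative.eval x ≠ 0)
    (hWf : 0 ≤ (wronskian f.derivative f).eval 0) (hW : ∀ x, 0 ≤ (wronskian g f).eval x)
    {δ : K} (hδ : 0 ≤ δ) (hδle : 2 * δ * (f.derivative.eval 0 / f.eval 0) ≤ 1) :
    g.derivative.eval (-δ) / f.derivative.eval (-δ) ≤ g.eval 0 / f.eval 0 := by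
  have hshift := eval_derivative_neg_div_eval_zero_pos hf hpos hWf hδ (by linarith)
  have hκ := eval_derivative_derivative_div_eval_zero_nonneg hf hpos hf'
  simp only [eval_wronskian_of_natDegree_le_two hf hg] at hW
  rw [eval_derivative_of_natDegree_le_two hf] at hshift ⊢
  rw [eval_derivative_of_natDegree_le_two hg]
  generalize f.derivative.derivative.eval 0 = a, f.derivative.eval 0 = b, f.eval 0 = c,
    g.derivative.derivative.eval 0 = a', g.derivative.eval 0 = b', g.eval 0 = c' at *
  have hc : c ≠ 0 := (div_ne_zero_iff.1 hpos.ne').2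
  have hden : 0 < c * (b + -δ * a) := by
    rw [← div_mul_cancel₀ (b + -δ * a) hc, mul_comm, mul_assoc]
    exact mul_pos hshift (mul_self_pos.2 hc)
  -- The Plücker relation between the `2 × 2` minors of the rows `(c, b, a)` and `(c', b', a')`.
  have hplucker : 2 * ((b' * a - a' * b) / 2) =
      b / c * (c' * a - a' * c) - a / c * (c' * b - b' * c) := by
    field_simp
    ring
  have hnum : δ * (c' * a - a' * c) ≤ c' * b - b' * c :=
    mul_le_of_forall_quadratic_nonneg hW hplucker hκ hδ hδle
  rw [← sub_nonneg, div_sub_div _ _ hc (div_ne_zero_iff.1 hshift.ne').1]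
  exact div_nonneg (by linarith) hden.le

end DegreeTwo

section RealStable

open MvPolynomial (pderiv degreeOf)
open Filter Set Topology ComplexConjugate

variable {n : ℕ} {q : MvPolynomial (Fin n) ℝ}

theorem RealStable.im_aeval_pderiv_mul_conj_nonpos_of_pos (hq : RealStable q) (j : Fin n)
    {w : Fin n → ℂ} (hw : ∀ k, 0 < (w k).im) :
    (MvPolynomial.aeval w (pderiv j q) * conj (MvPolynomial.aeval w q)).im ≤ 0 := by
  have hval (p : MvPolynomial (Fin n) ℝ) :
      (lineRestriction w (Pi.single j 1) p).eval 0 = MvPolynomial.aeval w p := by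
    simp [← coe_aeval_eq_eval, aeval_lineRestriction]
  rw [← hval, ← hval, ← derivative_lineRestriction_single]
  refine im_eval_derivative_mul_conj_eval_nonpos fun r hr => ?_
  by_contra! hr_im
  rw [Complex.zero_im] at hr_im
  rw [IsRoot.def, ← coe_aeval_eq_eval, aeval_lineRestriction] at hr
  refine hq _ (fun k => ?_) hr
  obtain rfl | hk := eq_or_ne k j
  · simpa using add_pos (hw k) hr_im
  · simpa [hk] using hw k

theorem RealStable.im_aeval_pderiv_mul_conj_nonpos (hq : RealStable q) (j : Fin n)
    {w : Fin n → ℂ} (hw : ∀ k, 0 ≤ (w k).im) :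
    (MvPolynomial.aeval w (pderiv j q) * conj (MvPolynomial.aeval w q)).im ≤ 0 := by
  have hcont (p : MvPolynomial (Fin n) ℝ) :
      Continuous fun w : Fin n → ℂ => MvPolynomial.aeval w p := by
    simpa only [MvPolynomial.aeval_def, MvPolynomial.eval_map] using
      MvPolynomial.continuous_eval (MvPolynomial.map (algebraMap ℝ ℂ) p)
  have hclosed : IsClosed {w : Fin n → ℂ |
      (MvPolynomial.aeval w (pderiv j q) * conj (MvPolynomial.aeval w q)).im ≤ 0} :=
    isClosed_le (Complex.continuous_im.comp
      ((hcont _).mul (Complex.continuous_conj.comp (hcont _)))) continuous_const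
  refine closure_minimal (s := univ.pi fun _ => {z : ℂ | 0 < z.im})
    (fun w hw => hq.im_aeval_pderiv_mul_conj_nonpos_of_pos j fun k => hw k trivial) hclosed ?_
  rw [closure_pi_set]
  simpa [Complex.closure_setOfPred_lt_im, Set.mem_pi] using hw

theorem RealStable.eval_wronskian_lineRestriction_nonneg (hq : RealStable q) (j : Fin n)
    {v : Fin n → ℝ} (hv : 0 ≤ v) (z : Fin n → ℝ) (x : ℝ) :
    0 ≤ (wronskian (lineRestriction z v (pderiv j q)) (lineRestriction z v q)).eval x := by
  refine eval_wronskian_nonneg_of_im_nonpos fun s hs => ?_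
  rw [aeval_lineRestriction, aeval_lineRestriction]
  refine hq.im_aeval_pderiv_mul_conj_nonpos j fun k => ?_
  simpa using mul_nonneg (hv k) hs.le

theorem AboveRoots.add {z : Fin n → ℝ} (hz : AboveRoots q z) {t : Fin n → ℝ}
    (ht : 0 ≤ t) : AboveRoots q (z + t) := fun u hu => by
  rw [add_assoc]
  exact hz _ (add_nonneg ht hu)

theorem Phi_add_smul (q : MvPolynomial (Fin n) ℝ) (i : Fin n) (z v : Fin n → ℝ) (s : ℝ) :
    Phi q i (z + s • v) =
      (lineRestriction z v (pderiv i q)).eval s / (lineRestriction z v q).eval s := by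
  rw [Phi, eval_lineRestriction, eval_lineRestriction]

theorem antitoneOn_Phi_add_smul (hq : RealStable q) {z : Fin n → ℝ} (hz : AboveRoots q z)
    (i : Fin n) {t : Fin n → ℝ} (ht : 0 ≤ t) :
    AntitoneOn (fun s : ℝ => Phi q i (z + s • t)) (Ici 0) := by
  simp only [Phi_add_smul]
  refine antitoneOn_eval_div_eval (convex_Ici 0) (fun s hs => ?_)
    fun s _ => hq.eval_wronskian_lineRestriction_nonneg i ht z s
  rw [eval_lineRestriction]
  exact hz _ (smul_nonneg hs ht)

theorem Phi_add_le (hq : RealStable q) {z : Fin n → ℝ} (hz : AboveRoots q z) (i : Fin n)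
    {t : Fin n → ℝ} (ht : 0 ≤ t) : Phi q i (z + t) ≤ Phi q i z := by
  simpa using antitoneOn_Phi_add_smul hq hz i ht (mem_Ici.2 le_rfl) (mem_Ici.2 zero_le_one)
    zero_le_one

theorem Phi_nonneg (hq : RealStable q) {z : Fin n → ℝ} (hz : AboveRoots q z) (i : Fin n) :
    0 ≤ Phi q i z := by
  have hlim : Tendsto (fun s : ℝ => Phi q i (z + s • Pi.single i 1)) atTop (𝓝 0) := by
    simpa only [Phi_add_smul, derivative_lineRestriction_single] using
      tendsto_eval_derivative_div_eval_atTop (lineRestriction z (Pi.single i 1) q)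
  refine le_of_tendsto hlim ?_
  filter_upwards [eventually_ge_atTop 0] with s hs
  exact Phi_add_le hq hz i (smul_nonneg hs (Pi.single_nonneg.2 zero_le_one))

/- If `Φ` vanished at `z + t`, then, being nonincreasing and nonnegative, it would vanish at
`z + s • t` for all `s ≥ 1`, hence `∂ᵢq` would vanish on the whole line through `z`. -/
theorem Phi_add_pos (hq : RealStable q) {z : Fin n → ℝ} (hz : AboveRoots q z) {i : Fin n}
    (hΦ : 0 < Phi q i z) {t : Fin n → ℝ} (ht : 0 ≤ t) : 0 < Phi q i (z + t) := by
  refine (Phi_nonneg hq (hz.add ht) i).lt_of_ne' fun hzero => hΦ.ne' ?_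
  have hroot (s : ℝ) (hs : 1 ≤ s) : (lineRestriction z t (pderiv i q)).IsRoot s := by
    have hst : 0 ≤ s • t := smul_nonneg (zero_le_one.trans hs) ht
    have hle : Phi q i (z + s • t) ≤ 0 := by
      simpa [hzero] using antitoneOn_Phi_add_smul hq hz i ht (mem_Ici.2 zero_le_one)
        (mem_Ici.2 (zero_le_one.trans hs)) hs
    rw [IsRoot.def, eval_lineRestriction]
    exact (div_eq_zero_iff.1 (hle.antisymm (Phi_nonneg hq (hz.add hst) i))).resolve_right
      (hz _ hst)
  have hvanish : lineRestriction z t (pderiv i q) = 0 :=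
    eq_zero_of_infinite_isRoot _ ((Ici_infinite 1).mono hroot)
  simpa [hvanish] using Phi_add_smul q i z t 0

theorem AboveRoots.pderiv_of_Phi_pos (hq : RealStable q) {z : Fin n → ℝ} (hz : AboveRoots q z)
    {i : Fin n} (hΦ : 0 < Phi q i z) : AboveRoots (pderiv i q) z :=
  fun _ ht => (div_ne_zero_iff.1 (Phi_add_pos hq hz hΦ ht).ne').1

theorem Phi_eq_derivative_lineRestriction (q : MvPolynomial (Fin n) ℝ) (i : Fin n)
    (z : Fin n → ℝ) :
    Phi q i z = (lineRestriction z (Pi.single i 1) q).derivative.eval 0 /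
      (lineRestriction z (Pi.single i 1) q).eval 0 := by
  simpa [derivative_lineRestriction_single] using Phi_add_smul q i z (Pi.single i 1) 0

theorem AboveRoots.pderiv_sub_single (hq : RealStable q) {i : Fin n} (hdeg : degreeOf i q ≤ 2)
    {z : Fin n → ℝ} (hz : AboveRoots q z) (hΦ : 0 < Phi q i z) {δ : ℝ} (hδ : 0 ≤ δ)
    (hδlt : δ * Phi q i z < 1) : AboveRoots (pderiv i q) (z - Pi.single i δ) := fun t ht => by
  have he : (0 : Fin n → ℝ) ≤ Pi.single i 1 := Pi.single_nonneg.2 zero_le_one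
  have hpos := Phi_add_pos hq hz hΦ ht
  have hlt : δ * Phi q i (z + t) < 1 :=
    (mul_le_mul_of_nonneg_left (Phi_add_le hq hz i ht) hδ).trans_lt hδlt
  have hW := hq.eval_wronskian_lineRestriction_nonneg i he (z + t) 0
  rw [Phi_eq_derivative_lineRestriction] at hpos hlt
  rw [← derivative_lineRestriction_single] at hW
  have hshift := eval_derivative_neg_div_eval_zero_pos
    ((natDegree_lineRestriction_single_le _ _ _).trans hdeg) hpos hW hδ hlt
  rw [sub_add_eq_add_sub, sub_single_eq_add_neg_smul, ← eval_lineRestriction,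
    ← derivative_lineRestriction_single]
  exact (div_ne_zero_iff.1 hshift.ne').1

theorem Phi_pderiv_sub_single_le (hq : RealStable q) {i : Fin n} (hdeg : degreeOf i q ≤ 2)
    {z : Fin n → ℝ} (hz : AboveRoots q z) (hΦ : 0 < Phi q i z) {δ : ℝ} (hδ : 0 ≤ δ)
    (hδle : 2 * δ * Phi q i z ≤ 1) (j : Fin n) :
    Phi (pderiv i q) j (z - Pi.single i δ) ≤ Phi q j z := by
  have he : (0 : Fin n → ℝ) ≤ Pi.single i 1 := Pi.single_nonneg.2 zero_le_one
  have hW := hq.eval_wronskian_lineRestriction_nonneg i he z 0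
  have hne (x : ℝ) (hx : 0 ≤ x) :
      (lineRestriction z (Pi.single i 1) (pderiv i q)).eval x ≠ 0 := by
    rw [eval_lineRestriction]
    exact hz.pderiv_of_Phi_pos hq hΦ _ (smul_nonneg hx he)
  rw [Phi_eq_derivative_lineRestriction] at hΦ hδle
  rw [← derivative_lineRestriction_single] at hW
  simp only [← derivative_lineRestriction_single] at hne
  have hle := eval_derivative_div_eval_derivative_neg_le
    ((natDegree_lineRestriction_single_le z i q).trans hdeg)
    ((natDegree_lineRestriction_single_le z i (pderiv j q)).trans
      ((degreeOf_pderiv_le i j q).trans hdeg)) hΦ hne hW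
    (hq.eval_wronskian_lineRestriction_nonneg j he z) hδ hδle
  simpa [derivative_lineRestriction_single, pderiv_comm i j, eval_lineRestriction, Phi,
    sub_single_eq_add_neg_smul] using hle

end RealStable

/-- Degree-2 barrier shift: if `q` is real stable of degree at most 2 in `zᵢ`, `z` is above
the roots of `q` and `Φ_q^i(z) > 0`, then with `δ = 1/(2Φ_q^i(z))` the point `z - δeᵢ` is
above the roots of `∂ᵢq` and `Φ_{∂ᵢq}^j(z - δeᵢ) ≤ Φ_q^j(z)` for every `j`. -/
theorem barrier_shift_deg_two {n : ℕ} (q : MvPolynomial (Fin n) ℝ) (hq : RealStable q)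
    (i : Fin n) (hdeg : MvPolynomial.degreeOf i q ≤ 2)
    (z : Fin n → ℝ) (hz : AboveRoots q z) (hΦ : 0 < Phi q i z) :
    AboveRoots (MvPolynomial.pderiv i q) (z - Pi.single i (1/(2 * Phi q i z))) ∧
    ∀ j : Fin n,
      Phi (MvPolynomial.pderiv i q) j (z - Pi.single i (1/(2 * Phi q i z))) ≤ Phi q j z := by
  have hδ : 0 ≤ 1 / (2 * Phi q i z) := by positivity
  have hδΦ : 2 * (1 / (2 * Phi q i z)) * Phi q i z = 1 := by field_simp
  exact ⟨hz.pderiv_sub_single hq hdeg hΦ hδ (by linarith),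
    Phi_pderiv_sub_single_le hq hdeg hz hΦ hδ hδΦ.le⟩
end
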